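/- Let B = A₀ ⊆ A₁ ⊆ ⋯ ⊆ A_{s-1} ⊆ A_s = A be a chain of subalgebras (with the same identity) of an Artin algebra A, and for each 1 ≤ i ≤ s let I_{i-1} be a two-sided ideal of A_{i-1} that is also a left ideal of A_i, where s is a positive integer. If A is 1-syzygy-finite and B/(I_{s-1}⋯I₁I₀) is B-syzygy-finite (for example, representation-finite), then the finitistic dimension of B is finite. -/

import Mathlib

universe u

open TensorProduct

section Basic

variable (Λ : Type u) [Ring Λ]

/-- `ProjDimLE Λ n M` : the module `M` admits a projective resolution of length `≤ n`
by finitely generated projective `Λ`-modules. -/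
def ProjDimLE : ℕ → ModuleCat.{u} Λ → Prop
  | 0, M => Module.Projective Λ M
  | n + 1, M => ∃ (P : ModuleCat.{u} Λ) (g : P →ₗ[Λ] M),
      Module.Projective Λ P ∧ Module.Finite Λ P ∧ Function.Surjective g ∧
      ProjDimLE n (ModuleCat.of Λ (LinearMap.ker g))

/-- The finitistic dimension of `Λ` (computed on finitely generated modules) is finite. -/
def FinFinDim : Prop :=
  ∃ n : ℕ, ∀ M : ModuleCat.{u} Λ, Module.Finite Λ M →
    (∃ k : ℕ, ProjDimLE Λ k M) → ProjDimLE Λ n M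

/-- A module is indecomposable. -/
def ModIndec (M : ModuleCat.{u} Λ) : Prop :=
  Nontrivial M ∧ ∀ N₁ N₂ : Submodule Λ M, IsCompl N₁ N₂ → N₁ = ⊥ ∨ N₂ = ⊥

/-- A class of modules has only finitely many isomorphism classes of indecomposables. -/
def ClassRepFinite (C : ModuleCat.{u} Λ → Prop) : Prop :=
  ∃ (k : ℕ) (N : Fin k → ModuleCat.{u} Λ),
    ∀ M : ModuleCat.{u} Λ, C M → ModIndec Λ M → ∃ i, Nonempty (M ≃ₗ[Λ] N i)

/-- `Λ` is representation-finite. -/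
def RepFinite : Prop :=
  ClassRepFinite Λ (fun M => Module.Finite Λ M)

/-- `X` belongs to `add N`: it is a direct summand of a finite direct sum of copies of `N`. -/
def InAdd (N X : ModuleCat.{u} Λ) : Prop :=
  ∃ (k : ℕ) (i : X →ₗ[Λ] (Fin k → N)) (p : (Fin k → N) →ₗ[Λ] X),
    p.comp i = LinearMap.id

/-- A submodule is superfluous (small). -/
def IsSuperfluous {M : ModuleCat.{u} Λ} (N : Submodule Λ M) : Prop :=
  ∀ L : Submodule Λ M, L ⊔ N = ⊤ → L = ⊤

/-- `K` is (isomorphic to) the kernel of a projective cover of `M`, i.e. a first syzygy. -/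
def IsSyzygyOf (K M : ModuleCat.{u} Λ) : Prop :=
  ∃ (P : ModuleCat.{u} Λ) (g : P →ₗ[Λ] M), Module.Projective Λ P ∧ Module.Finite Λ P ∧
    Function.Surjective g ∧ IsSuperfluous Λ (LinearMap.ker g) ∧
    Nonempty (K ≃ₗ[Λ] LinearMap.ker g)

/-- `K` is an `n`-th syzygy of `M`. -/
def IsNthSyzygy : ℕ → ModuleCat.{u} Λ → ModuleCat.{u} Λ → Prop
  | 0, K, M => Nonempty (K ≃ₗ[Λ] M)
  | n + 1, K, M => ∃ K' : ModuleCat.{u} Λ, IsNthSyzygy n K' M ∧ IsSyzygyOf Λ K K'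

/-- A class `C` of modules is `m`-syzygy-finite. -/
def MSyzygyFiniteClass (m : ℕ) (C : ModuleCat.{u} Λ → Prop) : Prop :=
  ∃ N : ModuleCat.{u} Λ, Module.Finite Λ N ∧
    ∀ X, C X → ∀ K, IsNthSyzygy Λ m K X → InAdd Λ N K

/-- A class `C` of modules is syzygy-finite. -/
def SyzygyFiniteClass (C : ModuleCat.{u} Λ → Prop) : Prop :=
  ∃ m : ℕ, MSyzygyFiniteClass Λ m C

/-- `Λ` is 1-syzygy-finite. -/
def OneSyzygyFinite : Prop :=
  MSyzygyFiniteClass Λ 1 (fun X => Module.Finite Λ X)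

/-- `Λ` is syzygy-finite. -/
def AlgSyzygyFinite : Prop :=
  SyzygyFiniteClass Λ (fun X => Module.Finite Λ X)

/-- The Jacobson radical of `Λ` (intersection of the maximal left ideals). -/
def jacobsonRad : Ideal Λ := sInf {I : Ideal Λ | I.IsMaximal}

end Basic

/-- The Jacobson radical of a subalgebra, as a subset of the ambient algebra. -/
def radSet {R A : Type u} [CommRing R] [Ring A] [Algebra R A] (S : Subalgebra R A) : Set A :=
  Subtype.val '' ((jacobsonRad ↥S : Ideal ↥S) : Set ↥S)

section Rel

variable {R : Type u} [CommRing R] {B A : Type u} [Ring B] [Ring A]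
  [Algebra R B] [Algebra R A] (φ : B →ₐ[R] A)

/-- The tensor product `A ⊗_B X` of the (A,B)-bimodule `A` with a left `A`-module `X`
(viewed as a `B`-module via `φ`), realized as a quotient of `A ⊗_R X`. -/
noncomputable def relTensor (X : ModuleCat.{u} A) : ModuleCat.{u} A :=
  letI : Module R X := Module.compHom X (algebraMap R A)
  ModuleCat.of A ((A ⊗[R] X) ⧸ Submodule.span A
    {z : A ⊗[R] X | ∃ (a : A) (b : B) (x : X),
      z = (a * φ b) ⊗ₜ[R] x - a ⊗ₜ[R] (φ b • x)})

/-- `X` is `(A,B)`-projective: a direct summand of `A ⊗_B X`. -/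
noncomputable def RelProjective (X : ModuleCat.{u} A) : Prop :=
  ∃ (i : X →ₗ[A] relTensor φ X) (p : relTensor φ X →ₗ[A] X), p.comp i = LinearMap.id

/-- The map `g` admits a `B`-linear map `h` with `g ∘ h ∘ g = g`
(this encodes `(A,B)`-exactness of the corresponding short exact sequence). -/
def RelSplitB {P X : ModuleCat.{u} A} (g : P →ₗ[A] X) : Prop :=
  ∃ h : X →+ P, (∀ (b : B) (x : X), h (φ b • x) = φ b • h x) ∧
    ∀ p : P, g (h (g p)) = g p

/-- `RelProjDimLE φ n X` : `X` has an `(A,B)`-exact resolution of length `≤ n` by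
finitely generated `(A,B)`-projective modules, i.e. relative projective dimension `≤ n`. -/
noncomputable def RelProjDimLE : ℕ → ModuleCat.{u} A → Prop
  | 0, X => RelProjective φ X
  | n + 1, X => ∃ (P : ModuleCat.{u} A) (g : P →ₗ[A] X),
      RelProjective φ P ∧ Module.Finite A P ∧ Function.Surjective g ∧ RelSplitB φ g ∧
      RelProjDimLE n (ModuleCat.of A (LinearMap.ker g))

/-- Restriction of scalars along `φ` of an `A`-module, as an object of `ModuleCat B`. -/
def resMod (X : ModuleCat.{u} A) : ModuleCat.{u} B :=
  @ModuleCat.of B _ X _ (Module.compHom X φ.toRingHom)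

/-- The right `B`-module structure on `A` induced by `φ`. -/
def rightModB : Module Bᵐᵒᵖ A :=
  Module.compHom A (RingHom.op φ.toRingHom)

end Rel

variable {R : Type u} [CommRing R] [IsArtinianRing R]
  {A : Type u} [Ring A] [Algebra R A] [Module.Finite R A]

/-!
Write `B = A₀` and let `J ⊆ B` be the set of products of the ideals, a left-stable subset of `A`.
The first syzygy `Y ⊆ Bᵏ ⊆ Aᵏ` of a `B`-module `M` contains the `A`-submodule `U` of `Aᵏ` spanned
by `J Y`. Being a first syzygy over `A`, the module `U` lies in a fixed `add N`, while `Y / U` is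
killed by `J`, hence has its `m`-th syzygies in a fixed `add N'`. The horseshoe lemma and a rotation
then present an `m`-th syzygy of `Y` as the cokernel of a monomorphism within some fixed `add`.

By Igusa and Todorov, such cokernels `C`, when of finite projective dimension, have bounded
projective dimension. The two modules `X → Z` with cokernel `C` have a common syzygy, and the
relations between syzygies in `add N` form an ascending chain of subgroups of some `ℤʳ`, so after
adding a summand to both, the `n`-th syzygies agree for an `n` depending only on `N`. The `n`-th
syzygy of `C` is then essentially the cokernel of an endomorphism of a module from a fixed `add`.
Fitting's lemma splits off the part on which the endomorphism is bijective, and where it is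
nilpotent the finiteness of the projective dimension of the cokernel passes to the module itself.
-/

section ShortExact

variable {Λ : Type u} [Ring Λ] {W X Y Z : Type u} [AddCommGroup W] [Module Λ W]
  [AddCommGroup X] [Module Λ X] [AddCommGroup Y] [Module Λ Y] [AddCommGroup Z] [Module Λ Z]

/-- `0 → X → Y → Z → 0` is a short exact sequence of (unbundled) modules. -/
structure IsShortExact (f : X →ₗ[Λ] Y) (g : Y →ₗ[Λ] Z) : Prop where
  injective : Function.Injective f
  exact : Function.Exact f g
  surjective : Function.Surjective g

theorem isShortExact_ker_subtype {g : Y →ₗ[Λ] Z} (hg : Function.Surjective g) :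
    IsShortExact (LinearMap.ker g).subtype g :=
  ⟨Subtype.val_injective, LinearMap.exact_subtype_ker_map g, hg⟩

theorem isShortExact_mkQ (V : Submodule Λ Y) : IsShortExact V.subtype V.mkQ :=
  ⟨Subtype.val_injective, LinearMap.exact_subtype_mkQ V, V.mkQ_surjective⟩

theorem isShortExact_inl_snd : IsShortExact (LinearMap.inl Λ X Y) (LinearMap.snd Λ X Y) :=
  ⟨LinearMap.inl_injective, .inl_snd, LinearMap.snd_surjective⟩

namespace IsShortExact

variable {f : X →ₗ[Λ] Y} {g : Y →ₗ[Λ] Z}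

theorem exists_comp_eq (h : IsShortExact f g) (φ : W →ₗ[Λ] Y) (hφ : g ∘ₗ φ = 0) :
    ∃ ψ : W →ₗ[Λ] X, f ∘ₗ ψ = φ := by
  have hmem (w : W) : φ w ∈ LinearMap.range f := (h.exact _).1 (LinearMap.congr_fun hφ w)
  let e := LinearEquiv.ofInjective f h.injective
  exact ⟨e.symm ∘ₗ φ.codRestrict _ hmem,
    LinearMap.ext fun w => congrArg Subtype.val (e.apply_symm_apply ⟨φ w, hmem w⟩)⟩

theorem comp_equiv {X' Z' : Type u} [AddCommGroup X'] [Module Λ X'] [AddCommGroup Z']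
    [Module Λ Z'] (h : IsShortExact f g) (e : X' ≃ₗ[Λ] X) (e' : Z ≃ₗ[Λ] Z') :
    IsShortExact (f ∘ₗ e.toLinearMap) (e'.toLinearMap ∘ₗ g) := by
  refine ⟨h.injective.comp e.injective, fun y => ?_, e'.surjective.comp h.surjective⟩
  simp only [LinearMap.comp_apply, LinearEquiv.coe_coe, LinearEquiv.map_eq_zero_iff, h.exact y,
    Set.mem_range]
  exact e.surjective.exists

theorem prodMap {X' Y' Z' : Type u} [AddCommGroup X'] [Module Λ X'] [AddCommGroup Y']
    [Module Λ Y'] [AddCommGroup Z'] [Module Λ Z'] {f' : X' →ₗ[Λ] Y'} {g' : Y' →ₗ[Λ] Z'}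
    (h : IsShortExact f g) (h' : IsShortExact f' g') :
    IsShortExact (f.prodMap f') (g.prodMap g') := by
  refine ⟨h.injective.prodMap h'.injective, fun y => ?_, h.surjective.prodMap h'.surjective⟩
  simp [Prod.ext_iff, h.exact y.1, h'.exact y.2]

theorem prodMap_id (h : IsShortExact f g) (V : Type u) [AddCommGroup V] [Module Λ V] :
    IsShortExact (LinearMap.inl Λ Y V ∘ₗ f) (g.prodMap (LinearMap.id : V →ₗ[Λ] V)) := by
  refine ⟨LinearMap.inl_injective.comp h.injective, fun y => ?_,
    h.surjective.prodMap Function.surjective_id⟩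
  simp [Prod.ext_iff, h.exact y.1, @eq_comm _ (0 : V)]

theorem prodMap_id_comp_fst (h : IsShortExact f g) (V : Type u) [AddCommGroup V] [Module Λ V] :
    IsShortExact (f.prodMap (LinearMap.id : V →ₗ[Λ] V)) (g ∘ₗ LinearMap.fst Λ Y V) := by
  refine ⟨h.injective.prodMap Function.injective_id, fun y => ?_,
    h.surjective.comp LinearMap.fst_surjective⟩
  simp [Prod.ext_iff, h.exact y.1]

theorem compLeft (h : IsShortExact f g) (ι : Type) :
    IsShortExact (f.compLeft ι) (g.compLeft ι) := by
  refine ⟨h.injective.comp_left, fun y => ?_, h.surjective.comp_left⟩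
  simp [funext_iff, h.exact _, Classical.skolem]

theorem nonempty_equiv_prod [Module.Projective Λ Z] (h : IsShortExact f g) :
    Nonempty (Y ≃ₗ[Λ] X × Z) := by
  obtain ⟨l, hl⟩ := Module.projective_lifting_property g LinearMap.id h.surjective
  exact ⟨(h.exact.splitSurjectiveEquiv h.injective ⟨l, hl⟩).1⟩

/-- The kernel of `X × F → Y` is the pullback of `f` and `F → Y`, that is, the kernel `L` of
`F → Z`. -/
theorem rotate {L F : Type u} [AddCommGroup L] [Module Λ L] [AddCommGroup F] [Module Λ F]
    [Module.Projective Λ F] {i : L →ₗ[Λ] F} {p : F →ₗ[Λ] Z} (h : IsShortExact f g)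
    (h' : IsShortExact i p) :
    ∃ (a : L →ₗ[Λ] X × F) (b : X × F →ₗ[Λ] Y), IsShortExact a b := by
  obtain ⟨l, rfl⟩ := Module.projective_lifting_property g p h.surjective
  obtain ⟨m, hm⟩ := h.exists_comp_eq (-(l ∘ₗ i)) (LinearMap.ext fun y => by
    simpa using h'.exact.apply_apply_eq_zero y)
  have hm (y : L) : f (m y) + l (i y) = 0 := by
    rw [← LinearMap.comp_apply f, hm]
    simp
  refine ⟨m.prod i, f.coprod l, fun y z hyz => h'.injective (congrArg Prod.snd hyz), ?_, ?_⟩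
  · refine fun ⟨x, c⟩ => ⟨fun hx => ?_, ?_⟩
    · have hx : f x + l c = 0 := hx
      obtain ⟨y, rfl⟩ := (h'.exact c).1 (by
        simpa [h.exact.apply_apply_eq_zero] using congrArg g hx)
      exact ⟨y, Prod.ext (h.injective (add_right_cancel ((hm y).trans hx.symm))) rfl⟩
    · rintro ⟨y, hy⟩
      rw [← hy]
      exact hm y
  · intro y
    obtain ⟨c, hc⟩ := h'.surjective (g y)
    obtain ⟨x, hx⟩ := (h.exact (y - l c)).1 (by simpa [sub_eq_zero] using hc.symm)
    exact ⟨(x, c), by simp [hx]⟩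

theorem schanuel {K P L Q : Type u} [AddCommGroup K] [Module Λ K] [AddCommGroup P] [Module Λ P]
    [AddCommGroup L] [Module Λ L] [AddCommGroup Q] [Module Λ Q] [Module.Projective Λ P]
    [Module.Projective Λ Q] {i : K →ₗ[Λ] P} {p : P →ₗ[Λ] X} {j : L →ₗ[Λ] Q} {q : Q →ₗ[Λ] X}
    (h : IsShortExact i p) (h' : IsShortExact j q) : Nonempty ((K × Q) ≃ₗ[Λ] L × P) := by
  obtain ⟨a, b, hab⟩ := h.rotate h'
  exact hab.nonempty_equiv_prod

theorem exists_ker_comp {K L P M : Type u} [AddCommGroup K] [Module Λ K] [AddCommGroup L]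
    [Module Λ L] [AddCommGroup P] [Module Λ P] [AddCommGroup M] [Module Λ M] {i : K →ₗ[Λ] P}
    {p : P →ₗ[Λ] M} {j : L →ₗ[Λ] M} {q : M →ₗ[Λ] Y} (h : IsShortExact i p)
    (h' : IsShortExact j q) :
    ∃ (a : K →ₗ[Λ] LinearMap.ker (q ∘ₗ p)) (b : LinearMap.ker (q ∘ₗ p) →ₗ[Λ] L),
      IsShortExact a b := by
  obtain ⟨b, hb⟩ := h'.exists_comp_eq (p ∘ₗ (LinearMap.ker (q ∘ₗ p)).subtype)
    (LinearMap.ext fun t => t.2)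
  have hb (t) : j (b t) = p t.1 := LinearMap.congr_fun hb t
  let a : K →ₗ[Λ] LinearMap.ker (q ∘ₗ p) := i.codRestrict _ fun k => by
    simp [h.exact.apply_apply_eq_zero]
  refine ⟨a, b, fun x y hxy => h.injective (congrArg Subtype.val hxy), fun t => ?_, fun y => ?_⟩
  · rw [← map_eq_zero_iff j h'.injective, hb, h.exact t.1]
    simp [a, Subtype.ext_iff]
  · obtain ⟨x, hx⟩ := h.surjective (j y)
    exact ⟨⟨x, by simp [hx, h'.exact.apply_apply_eq_zero]⟩, h'.injective (by rw [hb, hx])⟩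

end IsShortExact

end ShortExact

section Summand

variable {Λ : Type u} [Ring Λ]

/-- `X` is isomorphic to a direct summand of `Y`. -/
def IsSummand (Λ : Type u) [Ring Λ] (X Y : Type u) [AddCommGroup X] [Module Λ X]
    [AddCommGroup Y] [Module Λ Y] : Prop :=
  ∃ (i : X →ₗ[Λ] Y) (p : Y →ₗ[Λ] X), p ∘ₗ i = LinearMap.id

namespace IsSummand

variable {X Y Z : Type u} [AddCommGroup X] [Module Λ X] [AddCommGroup Y] [Module Λ Y]
  [AddCommGroup Z] [Module Λ Z]

theorem of_equiv (e : X ≃ₗ[Λ] Y) : IsSummand Λ X Y :=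
  ⟨e, e.symm, e.symm_comp⟩

theorem trans (h : IsSummand Λ X Y) (h' : IsSummand Λ Y Z) : IsSummand Λ X Z := by
  obtain ⟨i, p, hip⟩ := h
  obtain ⟨j, q, hjq⟩ := h'
  refine ⟨j ∘ₗ i, p ∘ₗ q, ?_⟩
  rw [LinearMap.comp_assoc, ← LinearMap.comp_assoc i, hjq, LinearMap.id_comp, hip]

theorem fst : IsSummand Λ X (X × Y) :=
  ⟨LinearMap.inl Λ X Y, LinearMap.fst Λ X Y, LinearMap.fst_comp_inl ..⟩

theorem snd : IsSummand Λ Y (X × Y) :=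
  ⟨LinearMap.inr Λ X Y, LinearMap.snd Λ X Y, LinearMap.snd_comp_inr ..⟩

theorem prod {X' Y' : Type u} [AddCommGroup X'] [Module Λ X'] [AddCommGroup Y'] [Module Λ Y']
    (h : IsSummand Λ X Y) (h' : IsSummand Λ X' Y') : IsSummand Λ (X × X') (Y × Y') := by
  obtain ⟨i, p, hip⟩ := h
  obtain ⟨j, q, hjq⟩ := h'
  exact ⟨i.prodMap j, p.prodMap q, by rw [LinearMap.prodMap_comp, hip, hjq, LinearMap.prodMap_id]⟩

theorem pi {ι : Type} {E V : ι → Type u} [∀ i, AddCommGroup (E i)] [∀ i, Module Λ (E i)]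
    [∀ i, AddCommGroup (V i)] [∀ i, Module Λ (V i)] (h : ∀ i, IsSummand Λ (E i) (V i)) :
    IsSummand Λ (∀ i, E i) (∀ i, V i) := by
  choose i p hip using h
  exact ⟨.piMap i, .piMap p,
    LinearMap.ext fun x => funext fun a => LinearMap.congr_fun (hip a) (x a)⟩

theorem eval {ι : Type} (E : ι → Type u) [∀ i, AddCommGroup (E i)] [∀ i, Module Λ (E i)] (i : ι) :
    IsSummand Λ (E i) (∀ i, E i) := by
  classical
  exact ⟨LinearMap.single Λ E i, LinearMap.proj i, LinearMap.proj_comp_single_same ..⟩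

theorem exists_equiv_prod (h : IsSummand Λ X Y) :
    ∃ V : Submodule Λ Y, Nonempty (Y ≃ₗ[Λ] V × X) := by
  obtain ⟨i, p, hip⟩ := h
  have hp : Function.Surjective p := fun x => ⟨i x, LinearMap.congr_fun hip x⟩
  exact ⟨LinearMap.ker p, ⟨((isShortExact_ker_subtype hp).exact.splitSurjectiveEquiv
    Subtype.val_injective ⟨i, hip⟩).1⟩⟩

theorem finite (h : IsSummand Λ X Y) [Module.Finite Λ Y] : Module.Finite Λ X := by
  obtain ⟨i, p, hip⟩ := h
  exact Module.Finite.of_surjective p fun x => ⟨i x, LinearMap.congr_fun hip x⟩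

end IsSummand

end Summand

section ProjectiveDimension

open CategoryTheory

/-- The unbundled module `X` has projective dimension `< n`. -/
abbrev PdLT (Λ : Type u) [Ring Λ] (X : Type u) [AddCommGroup X] [Module Λ X] (n : ℕ) : Prop :=
  HasProjectiveDimensionLT (ModuleCat.of Λ X) n

/-- The unbundled module `X` has finite projective dimension. -/
def FinitePd (Λ : Type u) [Ring Λ] (X : Type u) [AddCommGroup X] [Module Λ X] : Prop :=
  ∃ n, PdLT Λ X n

variable {Λ : Type u} [Ring Λ] {X Y Z : Type u} [AddCommGroup X] [Module Λ X] [AddCommGroup Y]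
  [Module Λ Y] [AddCommGroup Z] [Module Λ Z]

theorem PdLT.mono {m n : ℕ} (hX : PdLT Λ X m) (h : m ≤ n) : PdLT Λ X n :=
  hasProjectiveDimensionLT_of_ge _ m n h

theorem IsSummand.pdLT {n : ℕ} (h : IsSummand Λ X Y) (hY : PdLT Λ Y n) : PdLT Λ X n := by
  obtain ⟨i, p, hip⟩ := h
  let r : Retract (ModuleCat.of Λ X) (ModuleCat.of Λ Y) :=
    { i := ModuleCat.ofHom i
      r := ModuleCat.ofHom p
      retract := by rw [← ModuleCat.ofHom_comp, hip]; rfl }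
  exact r.hasProjectiveDimensionLT n

theorem IsSummand.finitePd (h : IsSummand Λ X Y) (hY : FinitePd Λ Y) : FinitePd Λ X :=
  hY.imp fun _ => h.pdLT

theorem projective_iff_pdLT_one : Module.Projective Λ X ↔ PdLT Λ X 1 := by
  rw [IsProjective.iff_projective, projective_iff_hasProjectiveDimensionLT_one]

theorem pdLT_succ_of_projective [Module.Projective Λ X] (n : ℕ) : PdLT Λ X (n + 1) :=
  (projective_iff_pdLT_one.1 inferInstance).mono (by lia)

namespace IsShortExact

variable {f : X →ₗ[Λ] Y} {g : Y →ₗ[Λ] Z}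

theorem shortExact (h : IsShortExact f g) :
    (ModuleCat.shortComplexOfCompEqZero f g h.exact.linearMap_comp_eq_zero).ShortExact :=
  ModuleCat.shortComplex_shortExact _ h.exact h.injective h.surjective

theorem pdLT_left (h : IsShortExact f g) {n : ℕ} (hY : PdLT Λ Y n) (hZ : PdLT Λ Z (n + 1)) :
    PdLT Λ X n :=
  h.shortExact.hasProjectiveDimensionLT_X₁ n hY hZ

theorem pdLT_middle (h : IsShortExact f g) {n : ℕ} (hX : PdLT Λ X n) (hZ : PdLT Λ Z n) :
    PdLT Λ Y n :=
  h.shortExact.hasProjectiveDimensionLT_X₂ n hX hZ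

theorem pdLT_right (h : IsShortExact f g) {n : ℕ} (hX : PdLT Λ X n) (hY : PdLT Λ Y (n + 1)) :
    PdLT Λ Z (n + 1) :=
  h.shortExact.hasProjectiveDimensionLT_X₃ n hX hY

end IsShortExact

theorem PdLT.prod {n : ℕ} (hX : PdLT Λ X n) (hY : PdLT Λ Y n) : PdLT Λ (X × Y) n :=
  isShortExact_inl_snd.pdLT_middle hX hY

theorem PdLT.pi {n : ℕ} {ι : Type} [Finite ι] {E : ι → Type u} [∀ i, AddCommGroup (E i)]
    [∀ i, Module Λ (E i)] (h : ∀ i, PdLT Λ (E i) n) : PdLT Λ (∀ i, E i) n :=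
  Module.pi_induction' Λ (fun X _ _ => PdLT Λ X n) (fun X _ _ => PdLT Λ X n)
    (fun e => (IsSummand.of_equiv e.symm).pdLT) (fun e => (IsSummand.of_equiv e.symm).pdLT)
    (.mono (ModuleCat.isZero_of_subsingleton _).hasProjectiveDimensionLT_zero n.zero_le) .prod E h

theorem ProjDimLE.pdLT {n : ℕ} {M : ModuleCat.{u} Λ} (h : ProjDimLE Λ n M) :
    PdLT Λ M (n + 1) := by
  induction n generalizing M with
  | zero => exact projective_iff_pdLT_one.1 h
  | succ n ih =>
    obtain ⟨P, g, _, -, hg, hK⟩ := h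
    exact (isShortExact_ker_subtype hg).pdLT_right (ih hK) (pdLT_succ_of_projective _)

theorem PdLT.projDimLE [IsNoetherianRing Λ] {n : ℕ} {M : ModuleCat.{u} Λ} [Module.Finite Λ M]
    (h : PdLT Λ M (n + 1)) : ProjDimLE Λ n M := by
  induction n generalizing M with
  | zero => exact projective_iff_pdLT_one.2 h
  | succ n ih =>
    obtain ⟨k, g, hg⟩ := Module.Finite.exists_fin' Λ M
    have : Module.Finite Λ (ModuleCat.of Λ (LinearMap.ker g)) :=
      inferInstanceAs (Module.Finite Λ (LinearMap.ker g))
    exact ⟨.of Λ (Fin k → Λ), g, inferInstanceAs (Module.Projective Λ (Fin k → Λ)),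
      inferInstanceAs (Module.Finite Λ (Fin k → Λ)), hg,
      ih ((isShortExact_ker_subtype hg).pdLT_left (pdLT_succ_of_projective _) h)⟩

theorem finFinDim_of_forall_pdLT [IsNoetherianRing Λ] {n : ℕ}
    (h : ∀ (M : Type u) [AddCommGroup M] [Module Λ M] [Module.Finite Λ M],
      FinitePd Λ M → PdLT Λ M n) : FinFinDim Λ :=
  ⟨n, fun M _ ⟨k, hk⟩ => ((h M ⟨k + 1, hk.pdLT⟩).mono n.le_succ).projDimLE⟩

end ProjectiveDimension

section Additive

variable {Λ : Type u} [Ring Λ]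

namespace InAdd

variable {N N' X Y : Type u} [AddCommGroup N] [Module Λ N] [AddCommGroup N'] [Module Λ N']
  [AddCommGroup X] [Module Λ X] [AddCommGroup Y] [Module Λ Y]

theorem exists_isSummand (h : InAdd Λ (.of Λ N) (.of Λ X)) :
    ∃ k : ℕ, IsSummand Λ X (Fin k → N) := h

theorem of_isSummand_pi {ι : Type} [Finite ι] (h : IsSummand Λ X (ι → N)) :
    InAdd Λ (.of Λ N) (.of Λ X) := by
  obtain ⟨k, ⟨e⟩⟩ := Finite.exists_equiv_fin ι
  exact ⟨k, h.trans (.of_equiv (LinearEquiv.funCongrLeft Λ N e.symm))⟩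

theorem of_isSummand (h : IsSummand Λ X Y) (hY : InAdd Λ (.of Λ N) (.of Λ Y)) :
    InAdd Λ (.of Λ N) (.of Λ X) :=
  hY.exists_isSummand.imp fun _ => h.trans

variable (Λ N) in
theorem refl : InAdd Λ (.of Λ N) (.of Λ N) :=
  of_isSummand_pi (ι := Unit) (.of_equiv (LinearEquiv.funUnique Unit Λ N).symm)

theorem pi {ι : Type} [Finite ι] {E : ι → Type u} [∀ i, AddCommGroup (E i)]
    [∀ i, Module Λ (E i)] (h : ∀ i, InAdd Λ (.of Λ N) (.of Λ (E i))) :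
    InAdd Λ (.of Λ N) (.of Λ (∀ i, E i)) := by
  choose k hk using fun i => (h i).exists_isSummand
  exact of_isSummand_pi (ι := Σ i, Fin (k i))
    ((IsSummand.pi hk).trans (.of_equiv (LinearEquiv.piCurry Λ fun i (_ : Fin (k i)) => N).symm))

theorem prod (hX : InAdd Λ (.of Λ N) (.of Λ X)) (hY : InAdd Λ (.of Λ N) (.of Λ Y)) :
    InAdd Λ (.of Λ N) (.of Λ (X × Y)) := by
  obtain ⟨k, hk⟩ := hX.exists_isSummand
  obtain ⟨l, hl⟩ := hY.exists_isSummand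
  exact of_isSummand_pi (ι := Fin k ⊕ Fin l)
    ((hk.prod hl).trans (.of_equiv (LinearEquiv.sumArrowLequivProdArrow _ _ Λ N).symm))

theorem trans (hX : InAdd Λ (.of Λ N) (.of Λ X)) (hN : InAdd Λ (.of Λ N') (.of Λ N)) :
    InAdd Λ (.of Λ N') (.of Λ X) := by
  obtain ⟨k, hk⟩ := hX.exists_isSummand
  exact of_isSummand hk (.pi fun _ => hN)

theorem prod_left (hX : InAdd Λ (.of Λ N) (.of Λ X)) : InAdd Λ (.of Λ (N × N')) (.of Λ X) :=
  hX.trans (.of_isSummand .fst (.refl Λ (N × N')))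

theorem prod_right (hX : InAdd Λ (.of Λ N') (.of Λ X)) : InAdd Λ (.of Λ (N × N')) (.of Λ X) :=
  hX.trans (.of_isSummand .snd (.refl Λ (N × N')))

theorem finite [Module.Finite Λ N] (hX : InAdd Λ (.of Λ N) (.of Λ X)) : Module.Finite Λ X := by
  obtain ⟨k, hk⟩ := hX.exists_isSummand
  exact hk.finite

variable (X) in
theorem of_projective [Module.Finite Λ X] [Module.Projective Λ X] :
    InAdd Λ (.of Λ Λ) (.of Λ X) := by
  obtain ⟨k, g, hg⟩ := Module.Finite.exists_fin' Λ X
  obtain ⟨l, hl⟩ := Module.projective_lifting_property g LinearMap.id hg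
  exact ⟨k, l, g, hl⟩

end InAdd

end Additive

section Syzygy

/-- `K` is the kernel of a surjection onto `X` from a finitely generated projective module, not
necessarily a projective cover. -/
inductive IsFirstSyzygy (Λ : Type u) [Ring Λ] (K X : Type u) [AddCommGroup K] [Module Λ K]
    [AddCommGroup X] [Module Λ X] : Prop
  | intro {P : Type u} [AddCommGroup P] [Module Λ P] [Module.Projective Λ P] [Module.Finite Λ P]
      {i : K →ₗ[Λ] P} {p : P →ₗ[Λ] X} (h : IsShortExact i p)

/-- `K` is an `n`-th syzygy of `X`, computed by a not necessarily minimal resolution. -/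
def IsSyzygy (Λ : Type u) [Ring Λ] (n : ℕ) (K X : Type u) [AddCommGroup K] [Module Λ K]
    [AddCommGroup X] [Module Λ X] : Prop :=
  match n with
  | 0 => Nonempty (K ≃ₗ[Λ] X)
  | n + 1 => ∃ K' : ModuleCat.{u} Λ, IsSyzygy Λ n K' X ∧ IsFirstSyzygy Λ K K'

/-- `K` and `L` become isomorphic after adding finitely generated projective modules. -/
inductive StablyEquiv (Λ : Type u) [Ring Λ] (K L : Type u) [AddCommGroup K] [Module Λ K]
    [AddCommGroup L] [Module Λ L] : Prop
  | intro {P Q : Type u} [AddCommGroup P] [Module Λ P] [Module.Projective Λ P] [Module.Finite Λ P]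
      [AddCommGroup Q] [Module Λ Q] [Module.Projective Λ Q] [Module.Finite Λ Q]
      (e : (K × P) ≃ₗ[Λ] L × Q)

variable {Λ : Type u} [Ring Λ] {K L X Y Z : Type u} [AddCommGroup K] [Module Λ K]
  [AddCommGroup L] [Module Λ L] [AddCommGroup X] [Module Λ X] [AddCommGroup Y] [Module Λ Y]
  [AddCommGroup Z] [Module Λ Z]

namespace IsFirstSyzygy

variable (Λ X) in
theorem exists_of_finite [Module.Finite Λ X] : ∃ K : ModuleCat.{u} Λ, IsFirstSyzygy Λ K X := by
  obtain ⟨k, p, hp⟩ := Module.Finite.exists_fin' Λ X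
  exact ⟨.of Λ (LinearMap.ker p), .intro (isShortExact_ker_subtype hp)⟩

theorem congr (h : IsFirstSyzygy Λ K X) (e : L ≃ₗ[Λ] K) (e' : X ≃ₗ[Λ] Y) :
    IsFirstSyzygy Λ L Y := by
  obtain ⟨h⟩ := h
  exact .intro (h.comp_equiv e e')

theorem finite [IsNoetherianRing Λ] (h : IsFirstSyzygy Λ K X) : Module.Finite Λ K := by
  obtain ⟨h⟩ := h
  exact Module.Finite.of_injective _ h.injective

theorem prod (h : IsFirstSyzygy Λ K X) (h' : IsFirstSyzygy Λ L Y) :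
    IsFirstSyzygy Λ (K × L) (X × Y) := by
  obtain ⟨h⟩ := h
  obtain ⟨h'⟩ := h'
  exact .intro (h.prodMap h')

theorem pi (h : IsFirstSyzygy Λ K X) (k : ℕ) : IsFirstSyzygy Λ (Fin k → K) (Fin k → X) := by
  obtain @⟨P, _, _, _, _, _, _, h⟩ := h
  have : Module.Projective Λ (Fin k → P) :=
    .of_equiv (DFinsupp.linearEquivFunOnFintype (R := Λ) (M := fun _ : Fin k => P))
  exact .intro (h.compLeft (Fin k))

theorem stablyEquiv (h : IsFirstSyzygy Λ K X) (h' : IsFirstSyzygy Λ L X) :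
    StablyEquiv Λ K L := by
  obtain ⟨h⟩ := h
  obtain ⟨h'⟩ := h'
  obtain ⟨e⟩ := h.schanuel h'
  exact .intro e

theorem prod_projective (h : IsFirstSyzygy Λ K X) (P : Type u) [AddCommGroup P] [Module Λ P]
    [Module.Projective Λ P] [Module.Finite Λ P] : IsFirstSyzygy Λ K (X × P) := by
  obtain ⟨h⟩ := h
  exact .intro (h.prodMap_id P)

/-- **Horseshoe lemma**: with `0 → L → Q → Z → 0`, the rotated sequence `0 → L → X × Q → Y → 0` is
composed with `0 → K → P × Q → X × Q → 0`. -/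
theorem horseshoe {f : X →ₗ[Λ] Y} {g : Y →ₗ[Λ] Z} (hK : IsFirstSyzygy Λ K X)
    (hL : IsFirstSyzygy Λ L Z) (h : IsShortExact f g) :
    ∃ (T : ModuleCat.{u} Λ) (a : K →ₗ[Λ] T) (b : T →ₗ[Λ] L),
      IsFirstSyzygy Λ T Y ∧ IsShortExact a b := by
  obtain ⟨hK⟩ := hK
  obtain @⟨Q, _, _, _, _, _, _, hL⟩ := hL
  obtain ⟨_, q, hq⟩ := h.rotate hL
  obtain ⟨a, b, hab⟩ := (hK.prodMap_id Q).exists_ker_comp hq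
  exact ⟨.of Λ _, a, b, .intro (isShortExact_ker_subtype
    (hq.surjective.comp (hK.prodMap_id Q).surjective)), hab⟩

theorem pdLT_succ {n : ℕ} (h : IsFirstSyzygy Λ K X) (hK : PdLT Λ K n) : PdLT Λ X (n + 1) := by
  obtain ⟨h⟩ := h
  exact h.pdLT_right hK (pdLT_succ_of_projective n)

theorem pdLT_of_succ {n : ℕ} (h : IsFirstSyzygy Λ K X) (hX : PdLT Λ X (n + 2)) :
    PdLT Λ K (n + 1) := by
  obtain ⟨h⟩ := h
  exact h.pdLT_left (pdLT_succ_of_projective n) hX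

end IsFirstSyzygy

namespace StablyEquiv

theorem of_isFirstSyzygy (h : StablyEquiv Λ X Y) (hK : IsFirstSyzygy Λ K X)
    (hL : IsFirstSyzygy Λ L Y) : StablyEquiv Λ K L := by
  obtain ⟨e⟩ := h
  exact ((hK.prod_projective _).congr (.refl Λ K) e).stablyEquiv (hL.prod_projective _)

theorem inAdd (h : StablyEquiv Λ K L) {N : Type u} [AddCommGroup N] [Module Λ N]
    (hL : InAdd Λ (.of Λ N) (.of Λ L)) : InAdd Λ (.of Λ (N × Λ)) (.of Λ K) := by
  obtain ⟨e⟩ := h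
  exact .of_isSummand (.trans .fst (.of_equiv e))
    (hL.prod_left.prod (.prod_right (.of_projective _)))

end StablyEquiv

namespace IsSyzygy

variable {m n : ℕ}

theorem of_equiv (e : K ≃ₗ[Λ] X) : IsSyzygy Λ 0 K X :=
  ⟨e⟩

theorem _root_.IsFirstSyzygy.isSyzygy (h : IsFirstSyzygy Λ K X) : IsSyzygy Λ 1 K X :=
  ⟨.of Λ X, of_equiv (.refl Λ X), h⟩

theorem congr (h : IsSyzygy Λ n K X) (e : X ≃ₗ[Λ] Y) : IsSyzygy Λ n K Y := by
  induction n generalizing K with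
  | zero => exact of_equiv (h.some.trans e)
  | succ n ih => exact h.imp fun K' => .imp_left ih

theorem finite [IsNoetherianRing Λ] [Module.Finite Λ X] (h : IsSyzygy Λ n K X) :
    Module.Finite Λ K := by
  cases n with
  | zero => exact .equiv h.some.symm
  | succ n =>
    obtain ⟨K', -, h⟩ := h
    exact h.finite

variable (Λ n X) in
theorem exists_of_finite [IsNoetherianRing Λ] [Module.Finite Λ X] :
    ∃ K : ModuleCat.{u} Λ, IsSyzygy Λ n K X := by
  induction n with
  | zero => exact ⟨.of Λ X, of_equiv (.refl Λ X)⟩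
  | succ n ih =>
    obtain ⟨K', hK'⟩ := ih
    have := hK'.finite
    exact (IsFirstSyzygy.exists_of_finite Λ K').imp fun _ hK => ⟨K', hK', hK⟩

theorem prod (h : IsSyzygy Λ n K X) (h' : IsSyzygy Λ n L Y) :
    IsSyzygy Λ n (K × L) (X × Y) := by
  induction n generalizing K L with
  | zero => exact of_equiv (h.some.prodCongr h'.some)
  | succ n ih =>
    obtain ⟨K', hK', h⟩ := h
    obtain ⟨L', hL', h'⟩ := h'
    exact ⟨.of Λ (K' × L'), ih hK' hL', h.prod h'⟩

theorem pi (h : IsSyzygy Λ n K X) (k : ℕ) : IsSyzygy Λ n (Fin k → K) (Fin k → X) := by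
  induction n generalizing K with
  | zero => exact of_equiv (.piCongrRight fun _ => h.some)
  | succ n ih =>
    obtain ⟨K', hK', h⟩ := h
    exact ⟨.of Λ (Fin k → K'), ih hK', h.pi k⟩

theorem stablyEquiv (h : IsSyzygy Λ n K X) (h' : IsSyzygy Λ n L X) : StablyEquiv Λ K L := by
  induction n generalizing K L with
  | zero =>
    exact .intro ((h.some.trans h'.some.symm).prodCongr (.refl Λ PUnit.{u + 1}))
  | succ n ih =>
    obtain ⟨K', hK', h⟩ := h
    obtain ⟨L', hL', h'⟩ := h'
    exact (ih hK' hL').of_isFirstSyzygy h h'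

theorem inAdd [IsNoetherianRing Λ] {N N' : Type u} [AddCommGroup N] [Module Λ N]
    [Module.Finite Λ N] [AddCommGroup N'] [Module Λ N'] (h : IsSyzygy Λ n K X)
    (hX : InAdd Λ (.of Λ N) (.of Λ X)) (hN : IsSyzygy Λ n N' N) :
    InAdd Λ (.of Λ (N' × Λ)) (.of Λ K) := by
  obtain ⟨k, hk⟩ := hX.exists_isSummand
  obtain ⟨V, ⟨e⟩⟩ := hk.exists_equiv_prod
  have : Module.Finite Λ V := (IsSummand.trans .fst (.of_equiv e.symm)).finite
  obtain ⟨L, hL⟩ := exists_of_finite Λ V n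
  exact .of_isSummand .snd
    (((hL.prod h).congr e.symm).stablyEquiv (hN.pi k) |>.inAdd (.pi fun _ => .refl Λ N'))

theorem horseshoe {f : X →ₗ[Λ] Y} {g : Y →ₗ[Λ] Z} (hK : IsSyzygy Λ n K X)
    (hL : IsSyzygy Λ n L Z) (h : IsShortExact f g) :
    ∃ (T : ModuleCat.{u} Λ) (a : K →ₗ[Λ] T) (b : T →ₗ[Λ] L),
      IsSyzygy Λ n T Y ∧ IsShortExact a b := by
  induction n generalizing K L with
  | zero => exact ⟨.of Λ Y, _, _, of_equiv (.refl Λ Y), h.comp_equiv hK.some hL.some.symm⟩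
  | succ n ih =>
    obtain ⟨K', hK', hK⟩ := hK
    obtain ⟨L', hL', hL⟩ := hL
    obtain ⟨T', a', b', hT', h'⟩ := ih hK' hL'
    obtain ⟨T, a, b, hT, hab⟩ := hK.horseshoe hL h'
    exact ⟨T, a, b, ⟨T', hT', hT⟩, hab⟩

theorem pdLT_add (h : IsSyzygy Λ m K X) (hK : PdLT Λ K n) : PdLT Λ X (n + m) := by
  induction m generalizing K n with
  | zero => exact (IsSummand.of_equiv h.some.symm).pdLT hK
  | succ m ih =>
    obtain ⟨K', hK', h⟩ := h
    exact (ih hK' (h.pdLT_succ hK)).mono (by lia)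

theorem pdLT_of_add (h : IsSyzygy Λ m K X) (hX : PdLT Λ X (n + m + 1)) : PdLT Λ K (n + 1) := by
  induction m generalizing K n with
  | zero => exact (IsSummand.of_equiv h.some).pdLT hX
  | succ m ih =>
    obtain ⟨K', hK', h⟩ := h
    exact h.pdLT_of_succ (ih hK' (hX.mono (by lia)))

theorem finitePd (h : IsSyzygy Λ m K X) (hX : FinitePd Λ X) : FinitePd Λ K := by
  obtain ⟨n, hn⟩ := hX
  exact ⟨n + 1, h.pdLT_of_add (hn.mono (by lia))⟩

end IsSyzygy

theorem IsSyzygyOf.isFirstSyzygy {K M : ModuleCat.{u} Λ} (h : IsSyzygyOf Λ K M) :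
    IsFirstSyzygy Λ K M := by
  obtain ⟨P, g, _, _, hg, -, ⟨e⟩⟩ := h
  exact .intro ((isShortExact_ker_subtype hg).comp_equiv e (.refl Λ M))

theorem IsNthSyzygy.isSyzygy {n : ℕ} {K M : ModuleCat.{u} Λ} (h : IsNthSyzygy Λ n K M) :
    IsSyzygy Λ n K M := by
  induction n generalizing K with
  | zero => exact h
  | succ n ih =>
    obtain ⟨K', hK', h⟩ := h
    exact ⟨K', ih hK', h.isFirstSyzygy⟩

end Syzygy

section ProjectiveCover

variable {Λ : Type u} [Ring Λ]

theorem exists_isCompl_ker_range_pow_succ {X : Type u} [AddCommGroup X] [Module Λ X]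
    [IsArtinian Λ X] [IsNoetherian Λ X] (f : Module.End Λ X) :
    ∃ n : ℕ, IsCompl (LinearMap.ker (f ^ (n + 1))) (LinearMap.range (f ^ (n + 1))) :=
  (((Filter.tendsto_add_atTop_nat 1).eventually f.eventually_isCompl_ker_pow_range_pow)).exists

theorem exists_isCompl_surjective_of_range_le {P M : Type u} [AddCommGroup P] [Module Λ P]
    [AddCommGroup M] [Module Λ M] [IsArtinian Λ P] [IsNoetherian Λ P] {g : P →ₗ[Λ] M}
    (hg : Function.Surjective g) {h : Module.End Λ P} (hgh : g ∘ₗ h = g) {L : Submodule Λ P}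
    (hL : LinearMap.range h ≤ L) :
    ∃ V W : Submodule Λ P, IsCompl V W ∧ V ≤ L ∧ Function.Surjective (g.domRestrict V) := by
  obtain ⟨n, hn⟩ := exists_isCompl_ker_range_pow_succ h
  have hpow (m : ℕ) : g ∘ₗ h ^ m = g := by
    induction m with
    | zero => rfl
    | succ m ih => rw [pow_succ, Module.End.mul_eq_comp, ← LinearMap.comp_assoc, ih, hgh]
  refine ⟨LinearMap.range (h ^ (n + 1)), _, hn.symm, ?_, fun y => ?_⟩
  · rw [pow_succ', Module.End.mul_eq_comp]
    exact (LinearMap.range_comp_le_range _ _).trans hL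
  · obtain ⟨x, rfl⟩ := hg y
    exact ⟨⟨_, x, rfl⟩, LinearMap.congr_fun (hpow (n + 1)) x⟩

theorem projective_of_isCompl {P : Type u} [AddCommGroup P] [Module Λ P] [Module.Projective Λ P]
    {V W : Submodule Λ P} (h : IsCompl V W) : Module.Projective Λ V :=
  .of_split V.subtype (Submodule.projectionOnto V W h) (by ext x; simp)

/-- A finitely generated projective module of minimal length mapping onto `M` is a projective
cover. -/
theorem exists_isSyzygyOf [IsArtinianRing Λ] (M : ModuleCat.{u} Λ) [Module.Finite Λ M] :
    ∃ K : ModuleCat.{u} Λ, IsSyzygyOf Λ K M := by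
  obtain ⟨k, g₀, hg₀⟩ := Module.Finite.exists_fin' Λ M
  obtain ⟨P, ⟨_, _, g, hg⟩, hmin⟩ := exists_minimalFor_of_wellFoundedLT
    (fun P : ModuleCat.{u} Λ => Module.Projective Λ P ∧ Module.Finite Λ P ∧
      ∃ g : P →ₗ[Λ] M, Function.Surjective g) (fun P => Module.length Λ P)
    ⟨.of Λ (Fin k → Λ), inferInstanceAs (Module.Projective Λ (Fin k → Λ)),
      inferInstanceAs (Module.Finite Λ (Fin k → Λ)), g₀, hg₀⟩
  refine ⟨.of Λ (LinearMap.ker g), P, g, ‹_›, ‹_›, hg, fun L hL => ?_, ⟨.refl Λ _⟩⟩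
  obtain ⟨h, hh⟩ := Module.projective_lifting_property _ g
    ((LinearMap.surjective_domRestrict_iff hg).2 (codisjoint_iff.2 hL))
  obtain ⟨V, W, hVW, hVL, hV⟩ := exists_isCompl_surjective_of_range_le hg (h := L.subtype ∘ₗ h) hh
    ((LinearMap.range_comp_le_range _ _).trans L.range_subtype.le)
  by_contra hL'
  have hlt : Module.length Λ V < Module.length Λ P :=
    Submodule.length_lt fun hV' => hL' (top_le_iff.1 (hV' ▸ hVL))
  exact hlt.not_ge (hmin (j := .of Λ V)
    ⟨projective_of_isCompl hVW, inferInstanceAs (Module.Finite Λ V), _, hV⟩ hlt.le)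

theorem exists_isNthSyzygy [IsArtinianRing Λ] (n : ℕ) (M : ModuleCat.{u} Λ) [Module.Finite Λ M] :
    ∃ K : ModuleCat.{u} Λ, IsNthSyzygy Λ n K M := by
  induction n with
  | zero => exact ⟨M, ⟨.refl Λ M⟩⟩
  | succ n ih =>
    obtain ⟨K', hK'⟩ := ih
    have := hK'.isSyzygy.finite
    exact (exists_isSyzygyOf K').imp fun _ hK => ⟨K', hK', hK⟩

end ProjectiveCover

section KrullSchmidt

variable {Λ : Type u} [Ring Λ]

section LocalEnd

variable {E X : Type u} [AddCommGroup E] [Module Λ E] [AddCommGroup X] [Module Λ X]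

variable (Λ E) in
theorem nontrivial_of_isLocalRing_end [IsLocalRing (Module.End Λ E)] : Nontrivial E := by
  by_contra h
  rw [not_nontrivial_iff_subsingleton] at h
  exact zero_ne_one (α := Module.End Λ E) (Subsingleton.elim _ _)

theorem IsSummand.exists_of_pi [IsLocalRing (Module.End Λ E)] {ι : Type} [Finite ι]
    {V : ι → Type u} [∀ i, AddCommGroup (V i)] [∀ i, Module Λ (V i)]
    (h : IsSummand Λ E (∀ i, V i)) : ∃ i, IsSummand Λ E (V i) := by
  classical
  have := Fintype.ofFinite ι
  obtain ⟨i, p, hip⟩ := h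
  let a (j : ι) : Module.End Λ E := (p ∘ₗ LinearMap.single Λ V j) ∘ₗ (LinearMap.proj j ∘ₗ i)
  have ha : ∑ j, a j = 1 := LinearMap.ext fun x => by
    simpa [a, ← map_sum, Finset.univ_sum_single] using LinearMap.congr_fun hip x
  obtain ⟨j, -, hj⟩ := IsLocalRing.exists_of_isUnit_sum (ha ▸ isUnit_one)
  obtain ⟨c, hc⟩ := hj.exists_left_inv
  exact ⟨j, _, c ∘ₗ (p ∘ₗ LinearMap.single Λ V j), hc⟩

theorem IsSummand.nonempty_equiv [Nontrivial E] [IsLocalRing (Module.End Λ X)]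
    (h : IsSummand Λ E X) : Nonempty (E ≃ₗ[Λ] X) := by
  obtain ⟨i, p, hip⟩ := h
  have hpi (x : E) : p (i x) = x := LinearMap.congr_fun hip x
  have hinj : Function.Injective i := Function.LeftInverse.injective hpi
  let a : Module.End Λ X := i ∘ₗ p
  rcases IsLocalRing.isUnit_or_isUnit_of_add_one (add_sub_cancel a 1) with h | h
  · refine ⟨.ofBijective i ⟨hinj, fun x => ?_⟩⟩
    obtain ⟨y, hy⟩ := ((Module.End.isUnit_iff a).1 h).2 x
    exact ⟨p y, hy⟩
  · obtain ⟨x, hx⟩ := exists_ne (0 : E)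
    have h0 : (1 - a) (i x) = 0 := by simp [a, hpi]
    exact absurd (((Module.End.isUnit_iff _).1 h).1 (h0.trans (map_zero _).symm))
      ((map_ne_zero_iff i hinj).2 hx)

theorem exists_isCompl_of_not_isLocalRing_end [IsArtinian Λ X] [IsNoetherian Λ X] [Nontrivial X]
    (h : ¬ IsLocalRing (Module.End Λ X)) :
    ∃ U V : Submodule Λ X, IsCompl U V ∧ U ≠ ⊥ ∧ V ≠ ⊥ := by
  obtain ⟨f, hf, hf'⟩ : ∃ f : Module.End Λ X, ¬ IsUnit f ∧ ¬ IsUnit (1 - f) := by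
    by_contra! hf
    exact h (.of_isUnit_or_isUnit_one_sub_self fun f => or_iff_not_imp_left.2 (hf f))
  obtain ⟨n, hn⟩ := exists_isCompl_ker_range_pow_succ f
  refine ⟨_, _, hn, fun hker => hf ?_, fun hrange => hf' ?_⟩
  · rw [← isUnit_pow_iff n.succ_ne_zero, Module.End.isUnit_iff]
    exact IsArtinian.bijective_of_injective_endomorphism _ (LinearMap.ker_eq_bot.1 hker)
  · exact IsNilpotent.isUnit_one_sub ⟨n + 1, LinearMap.range_eq_bot.1 hrange⟩

end LocalEnd

theorem exists_equiv_pi_isLocalRing_end (X : Type u) [AddCommGroup X] [Module Λ X]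
    [IsArtinian Λ X] [IsNoetherian Λ X] :
    ∃ (ι : Type) (_ : Fintype ι) (E : ι → ModuleCat.{u} Λ),
      (∀ i, IsLocalRing (Module.End Λ (E i))) ∧ Nonempty (X ≃ₗ[Λ] ∀ i, E i) := by
  induction h : Module.length Λ X using WellFoundedLT.induction generalizing X with
  | ind l ih =>
  subst h
  rcases subsingleton_or_nontrivial X with _ | _
  · exact ⟨Empty, inferInstance, nofun, nofun, ⟨0⟩⟩
  by_cases hX : IsLocalRing (Module.End Λ X)
  · exact ⟨Unit, inferInstance, fun _ => .of Λ X, fun _ => hX,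
      ⟨(LinearEquiv.funUnique Unit Λ X).symm⟩⟩
  obtain ⟨U, V, hUV, hU, hV⟩ := exists_isCompl_of_not_isLocalRing_end hX
  have hU' : U ≠ ⊤ := fun h => hV (top_disjoint.1 (h ▸ hUV.disjoint))
  have hV' : V ≠ ⊤ := fun h => hU (disjoint_top.1 (h ▸ hUV.disjoint))
  obtain ⟨ι, _, E, hE, ⟨e⟩⟩ := ih _ (Submodule.length_lt hU') U rfl
  obtain ⟨κ, _, F, hF, ⟨f⟩⟩ := ih _ (Submodule.length_lt hV') V rfl
  exact ⟨ι ⊕ κ, inferInstance, Sum.elim E F, Sum.rec hE hF,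
    ⟨(Submodule.prodEquivOfIsCompl U V hUV).symm.trans ((e.prodCongr f).trans
      (LinearEquiv.sumPiEquivProdPi Λ ι κ fun i => (Sum.elim E F i : ModuleCat Λ)).symm)⟩⟩

/-- The direct sum of `a i` copies of `D i`, over all `i`. -/
abbrev piPow {ι : Type} (D : ι → ModuleCat.{u} Λ) (a : ι → ℕ) : Type u :=
  (i : ι) → Fin (a i) → D i

section PiPow

variable {ι : Type} (D : ι → ModuleCat.{u} Λ)

/-- Splits the copies of each `D i` into the first `a i` and the last `b i` ones. -/
def piPowAddEquiv (a b : ι → ℕ) : piPow D (a + b) ≃ₗ[Λ] piPow D a × piPow D b :=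
  (LinearEquiv.piCongrRight fun i => (LinearEquiv.funCongrLeft Λ (D i) finSumFinEquiv).trans
    (LinearEquiv.sumArrowLequivProdArrow (Fin (a i)) (Fin (b i)) Λ (D i))).trans
  { Equiv.arrowProdEquivProdArrow ι _ _ with
    map_add' := fun _ _ => rfl
    map_smul' := fun _ _ => rfl }

theorem exists_nonempty_pi_equiv_piPow {κ : Type} [Finite κ] {F : κ → Type u}
    [∀ k, AddCommGroup (F k)] [∀ k, Module Λ (F k)] (h : ∀ k, ∃ i, Nonempty (F k ≃ₗ[Λ] D i)) :
    ∃ a : ι → ℕ, Nonempty ((∀ k, F k) ≃ₗ[Λ] piPow D a) := by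
  choose σ hσ using h
  have hσ' (s : Σ i, {k // σ k = i}) : Nonempty (F (Equiv.sigmaFiberEquiv σ s) ≃ₗ[Λ] D s.1) := by
    obtain ⟨_, k, rfl⟩ := s
    exact hσ k
  choose a ha using fun i => Finite.exists_equiv_fin {k // σ k = i}
  refine ⟨a, ⟨(LinearEquiv.piCongrLeft Λ F (Equiv.sigmaFiberEquiv σ)).symm.trans
    ((LinearEquiv.piCongrRight fun s => (hσ' s).some).trans
      ((LinearEquiv.piCurry Λ fun i (_ : {k // σ k = i}) => (D i : Type u)).trans
        (LinearEquiv.piCongrRight fun i => LinearEquiv.funCongrLeft Λ (D i) (ha i).some.symm)))⟩⟩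

theorem inAdd_piPow {N : Type u} [AddCommGroup N] [Module Λ N] [Finite ι]
    (hD : ∀ i, InAdd Λ (.of Λ N) (D i)) (a : ι → ℕ) : InAdd Λ (.of Λ N) (.of Λ (piPow D a)) :=
  .pi fun i => .pi fun _ => hD i

end PiPow

variable (N : Type u) [AddCommGroup N] [Module Λ N]

theorem exists_forall_inAdd_equiv_piPow [IsArtinianRing Λ] [Module.Finite Λ N] :
    ∃ (ι : Type) (_ : Fintype ι) (D : ι → ModuleCat.{u} Λ), (∀ i, InAdd Λ (.of Λ N) (D i)) ∧
      ∀ (X : Type u) [AddCommGroup X] [Module Λ X], InAdd Λ (.of Λ N) (.of Λ X) →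
        ∃ a : ι → ℕ, Nonempty (X ≃ₗ[Λ] piPow D a) := by
  obtain ⟨ι, _, D, hD, ⟨e⟩⟩ := exists_equiv_pi_isLocalRing_end (Λ := Λ) N
  refine ⟨ι, inferInstance, D, fun i => .of_isSummand ((IsSummand.eval _ i).trans
    (.of_equiv e.symm)) (.refl Λ N), fun X _ _ hX => ?_⟩
  have := hX.finite
  obtain ⟨κ, _, F, hF, ⟨f⟩⟩ := exists_equiv_pi_isLocalRing_end (Λ := Λ) X
  have hFD (k : κ) : ∃ i, Nonempty (F k ≃ₗ[Λ] D i) := by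
    obtain ⟨l, hl⟩ := hX.exists_isSummand
    obtain ⟨_, hFN⟩ := (((IsSummand.eval _ k).trans (.of_equiv f.symm)).trans hl).exists_of_pi
    obtain ⟨i, hi⟩ := (hFN.trans (.of_equiv e)).exists_of_pi
    have := nontrivial_of_isLocalRing_end Λ (F k)
    exact ⟨i, hi.nonempty_equiv⟩
  obtain ⟨a, ⟨e'⟩⟩ := exists_nonempty_pi_equiv_piPow D hFD
  exact ⟨a, ⟨f.trans e'⟩⟩

theorem exists_forall_inAdd_pdLT [IsArtinianRing Λ] [Module.Finite Λ N] :
    ∃ d : ℕ, ∀ (X : Type u) [AddCommGroup X] [Module Λ X], InAdd Λ (.of Λ N) (.of Λ X) →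
      FinitePd Λ X → PdLT Λ X d := by
  obtain ⟨ι, _, D, -, hD⟩ := exists_forall_inAdd_equiv_piPow (Λ := Λ) N
  have (i : ι) : ∃ d, FinitePd Λ (D i) → PdLT Λ (D i) d := by
    by_cases h : FinitePd Λ (D i)
    · exact h.imp fun _ h _ => h
    · exact ⟨0, fun h' => absurd h' h⟩
  choose d hd using this
  refine ⟨Finset.univ.sup d, fun X _ _ hX hpd => ?_⟩
  obtain ⟨a, ⟨e⟩⟩ := hD X hX
  refine (IsSummand.of_equiv e).pdLT (.pi fun i => .pi fun t => ?_)
  have hDX : IsSummand Λ (D i) X :=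
    (IsSummand.eval _ t).trans ((IsSummand.eval _ i).trans (.of_equiv e.symm))
  exact (hd i (hDX.finitePd hpd)).mono (Finset.le_sup (Finset.mem_univ i))

end KrullSchmidt

section ExtInjective

open CategoryTheory Abelian

variable {Λ : Type u} [Ring Λ] {X Y Z : Type u} [AddCommGroup X] [Module Λ X] [AddCommGroup Y]
  [Module Λ Y] [AddCommGroup Z] [Module Λ Z]

/-- `f` induces injections `Extⁱ(Y, S) → Extⁱ(X, S)` for all `i ≥ n` and all `S`. -/
def ExtInjective (f : X →ₗ[Λ] Y) (n : ℕ) : Prop :=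
  ∀ i, n ≤ i → ∀ (S : ModuleCat.{u} Λ) (y : Ext (ModuleCat.of Λ Y) S i),
    (Ext.mk₀ (ModuleCat.ofHom f)).comp y (zero_add i) = 0 → y = 0

namespace ExtInjective

theorem comp {f : X →ₗ[Λ] Y} {g : Y →ₗ[Λ] Z} {m n : ℕ} (hg : ExtInjective g n)
    (hf : ExtInjective f m) : ExtInjective (g ∘ₗ f) (max m n) := by
  intro i hi S y hy
  refine hg i (le_of_max_le_right hi) S y (hf i (le_of_max_le_left hi) S _ ?_)
  rwa [Ext.mk₀_comp_mk₀_assoc]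

theorem pow {f : Module.End Λ X} {n : ℕ} (hf : ExtInjective f n) (m : ℕ) :
    ExtInjective (f ^ m) n := by
  induction m with
  | zero =>
    intro i _ S y hy
    rwa [← Ext.mk₀_id_comp y]
  | succ m ih =>
    rw [pow_succ, ← max_self n]
    exact ih.comp hf

theorem pdLT_of_zero {n : ℕ} (h : ExtInjective (0 : X →ₗ[Λ] Y) n) : PdLT Λ Y n := by
  refine (hasProjectiveDimensionLT_iff _ _).2 fun i hi S y => h i hi S y ?_
  rw [show ModuleCat.ofHom (0 : X →ₗ[Λ] Y) = 0 from rfl, Ext.mk₀_zero, Ext.zero_comp]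

end ExtInjective

namespace IsShortExact

variable {f : X →ₗ[Λ] Y} {g : Y →ₗ[Λ] Z} {n : ℕ}

theorem extInjective_left (h : IsShortExact f g) (hZ : PdLT Λ Z n) : ExtInjective f n := by
  intro i hi S y hy
  obtain ⟨z, rfl⟩ := Ext.contravariant_sequence_exact₂ h.shortExact S y hy
  have hz : z = 0 := Ext.eq_zero_of_hasProjectiveDimensionLT (X := ModuleCat.of Λ Z) z n hi
  rw [hz, Ext.comp_zero]

theorem extInjective_right (h : IsShortExact f g) (hX : PdLT Λ X n) :
    ExtInjective g (n + 1) := by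
  intro i hi S y hy
  obtain ⟨j, rfl⟩ := Nat.exists_eq_add_of_le' (n.succ_pos.trans_le hi)
  obtain ⟨x, rfl⟩ := Ext.contravariant_sequence_exact₃ h.shortExact S y hy (add_comm 1 j)
  have hx : x = 0 := Ext.eq_zero_of_hasProjectiveDimensionLT (X := ModuleCat.of Λ X) x n (by lia)
  rw [hx, Ext.comp_zero]

end IsShortExact

theorem isShortExact_ker_rangeRestrict (f : X →ₗ[Λ] Y) :
    IsShortExact (LinearMap.ker f).subtype f.rangeRestrict := by
  have h := isShortExact_ker_subtype f.surjective_rangeRestrict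
  rwa [LinearMap.ker_rangeRestrict] at h

theorem extInjective_of_ker_of_quotient_range {f : X →ₗ[Λ] Y} {m n : ℕ}
    (hker : PdLT Λ (LinearMap.ker f) m) (hcoker : PdLT Λ (Y ⧸ LinearMap.range f) n) :
    ExtInjective f (max (m + 1) n) := by
  rw [← f.subtype_comp_codRestrict _ f.mem_range_self]
  exact ((isShortExact_mkQ (LinearMap.range f)).extInjective_left hcoker).comp
    ((isShortExact_ker_rangeRestrict f).extInjective_right hker)

/-- `f` is eventually injective on `Ext`, and a nilpotent injective map is zero only on `0`. -/
theorem finitePd_of_isNilpotent {f : Module.End Λ X} (hf : IsNilpotent f)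
    (hker : FinitePd Λ (LinearMap.ker f)) (hcoker : FinitePd Λ (X ⧸ LinearMap.range f)) :
    FinitePd Λ X := by
  obtain ⟨m, hm⟩ := hker
  obtain ⟨n, hn⟩ := hcoker
  obtain ⟨k, hk⟩ := hf
  exact ⟨_, (hk ▸ (extInjective_of_ker_of_quotient_range hm hn).pow k).pdLT_of_zero⟩

theorem pdLT_quotient_range {f : X →ₗ[Λ] Y} {n : ℕ} (hker : PdLT Λ (LinearMap.ker f) n)
    (hX : PdLT Λ X (n + 1)) (hY : PdLT Λ Y (n + 2)) :
    PdLT Λ (Y ⧸ LinearMap.range f) (n + 2) :=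
  (isShortExact_mkQ _).pdLT_right ((isShortExact_ker_rangeRestrict f).pdLT_right hker hX) hY

theorem range_restrict_eq_ker_mkQ_comp_subtype {f : Module.End Λ X} {V W : Submodule Λ X}
    (h : IsCompl V W) (hV : ∀ x ∈ V, f x ∈ V) (hW : ∀ x ∈ W, f x ∈ W) :
    LinearMap.range (f.restrict hV) =
      LinearMap.ker ((LinearMap.range f).mkQ ∘ₗ V.subtype) := by
  ext ⟨x, hx⟩
  suffices (∃ v ∈ V, f v = x) ↔ ∃ v, f v = x by simpa [Subtype.ext_iff]
  refine ⟨fun ⟨v, _, hv⟩ => ⟨v, hv⟩, ?_⟩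
  rintro ⟨y, rfl⟩
  obtain ⟨v, hv, w, hw, rfl⟩ := Submodule.mem_sup.1 (h.sup_eq_top ▸ Submodule.mem_top : y ∈ V ⊔ W)
  have hfw : f w ∈ V := (V.add_mem_iff_right (hV v hv)).1 (map_add f v w ▸ hx)
  refine ⟨v, hv, ?_⟩
  rw [map_add, Submodule.disjoint_def.1 h.disjoint _ hfw (hW w hw), add_zero]

/-- The restriction of `f` to its Fitting null component. -/
theorem exists_isNilpotent_isSummand [IsArtinian Λ X] [IsNoetherian Λ X] (f : Module.End Λ X) :
    ∃ (V : Submodule Λ X) (g : Module.End Λ V), IsSummand Λ V X ∧ IsNilpotent g ∧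
      Nonempty (LinearMap.ker g ≃ₗ[Λ] LinearMap.ker f) ∧
      Nonempty ((V ⧸ LinearMap.range g) ≃ₗ[Λ] X ⧸ LinearMap.range f) := by
  obtain ⟨n, hn⟩ := exists_isCompl_ker_range_pow_succ f
  let V := LinearMap.ker (f ^ (n + 1))
  have hcomm (x : X) : (f ^ (n + 1)) (f x) = f ((f ^ (n + 1)) x) := by
    rw [← Module.End.mul_apply, ← Module.End.mul_apply, (Commute.pow_self f (n + 1)).eq]
  have hV (x : X) (hx : x ∈ V) : f x ∈ V := by
    rw [LinearMap.mem_ker, hcomm, LinearMap.mem_ker.1 hx, map_zero]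
  have hrange : LinearMap.range (f ^ (n + 1)) ≤ LinearMap.range f := by
    rw [pow_succ']
    exact LinearMap.range_comp_le_range _ _
  have hker : LinearMap.ker f ≤ V := LinearMap.ker_le_ker_comp f (f ^ n)
  let π : V →ₗ[Λ] X ⧸ LinearMap.range f := (LinearMap.range f).mkQ ∘ₗ V.subtype
  have hπ : Function.Surjective π := by
    rw [← LinearMap.range_eq_top, LinearMap.range_comp, Submodule.range_subtype,
      Submodule.map_mkQ_eq_top]
    exact top_le_iff.1 (hn.sup_eq_top.ge.trans (sup_le le_sup_right (hrange.trans le_sup_left)))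
  have hkerπ := range_restrict_eq_ker_mkQ_comp_subtype hn hV (by
    rintro _ ⟨x, rfl⟩
    exact ⟨f x, hcomm x⟩)
  refine ⟨V, f.restrict hV, ⟨V.subtype, Submodule.projectionOnto _ _ hn, by ext x; simp [V]⟩,
    ⟨n + 1, ?_⟩, ⟨?_⟩, ⟨(Submodule.quotEquivOfEq _ _ hkerπ).trans (π.quotKerEquivOfSurjective hπ)⟩⟩
  · rw [Module.End.pow_restrict]
    ext x
    exact x.2
  · rw [LinearMap.restrict, LinearMap.ker_codRestrict, LinearMap.ker_domRestrict]
    exact Submodule.comapSubtypeEquivOfLe hker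

/-- Restricting `f` to a summand of `X` on which it is nilpotent reduces the claim to
`finitePd_of_isNilpotent`. -/
theorem pdLT_quotient_range_of_forall_isSummand [IsArtinian Λ X] [IsNoetherian Λ X]
    {f : Module.End Λ X} {d : ℕ} [Module.Projective Λ (LinearMap.ker f)]
    (hcoker : FinitePd Λ (X ⧸ LinearMap.range f))
    (hd : ∀ V : Submodule Λ X, IsSummand Λ V X → FinitePd Λ V → PdLT Λ V d) :
    PdLT Λ (X ⧸ LinearMap.range f) (d + 3) := by
  obtain ⟨V, g, hV, hg, ⟨eker⟩, ⟨ecoker⟩⟩ := exists_isNilpotent_isSummand f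
  have hker (n : ℕ) : PdLT Λ (LinearMap.ker g) (n + 1) :=
    (IsSummand.of_equiv eker).pdLT (pdLT_succ_of_projective n)
  have hVd : PdLT Λ V d := hd V hV
    (finitePd_of_isNilpotent hg ⟨1, hker 0⟩ ((IsSummand.of_equiv ecoker).finitePd hcoker))
  exact (IsSummand.of_equiv ecoker.symm).pdLT
    (pdLT_quotient_range (hker d) (hVd.mono (by lia)) (hVd.mono (by lia)))

/-- `L × P` is the cokernel of the endomorphism `K × Q → K → T → T × P ≃ K × Q`, whose kernel
is `Q`. -/
theorem IsShortExact.pdLT_of_stablyEquiv [IsArtinianRing Λ] {K T L N : Type u} [AddCommGroup K]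
    [Module Λ K] [AddCommGroup T] [Module Λ T] [AddCommGroup L] [Module Λ L] [AddCommGroup N]
    [Module Λ N] [Module.Finite Λ K] {a : K →ₗ[Λ] T} {b : T →ₗ[Λ] L} (h : IsShortExact a b)
    (e : StablyEquiv Λ T K) (hL : FinitePd Λ L) {d : ℕ} (hK : InAdd Λ (.of Λ N) (.of Λ K))
    (hd : ∀ (V : Type u) [AddCommGroup V] [Module Λ V], InAdd Λ (.of Λ (N × Λ)) (.of Λ V) →
      FinitePd Λ V → PdLT Λ V d) : PdLT Λ L (d + 3) := by
  obtain @⟨P, Q, _, _, _, _, _, _, _, _, e⟩ := e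
  let a' : K →ₗ[Λ] K × Q := e.toLinearMap ∘ₗ LinearMap.inl Λ T P ∘ₗ a
  let f : Module.End Λ (K × Q) := a' ∘ₗ LinearMap.fst Λ K Q
  let π : K × Q →ₗ[Λ] L × P := b.prodMap LinearMap.id ∘ₗ e.symm.toLinearMap
  have ha' : Function.Injective a' :=
    e.injective.comp (LinearMap.inl_injective.comp h.injective)
  have hker : LinearMap.ker f = LinearMap.range (LinearMap.inr Λ K Q) := by
    rw [LinearMap.ker_comp_of_ker_eq_bot _ (LinearMap.ker_eq_bot.2 ha'), LinearMap.ker_fst]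
  have hrange : LinearMap.range f = LinearMap.ker π := by
    rw [LinearMap.range_comp_of_range_eq_top _ Submodule.range_fst]
    ext v
    obtain ⟨⟨t, p⟩, rfl⟩ := e.surjective v
    simp [a', π, Prod.ext_iff, h.exact t, @eq_comm _ (0 : P)]
  have hπ : Function.Surjective π :=
    (h.surjective.prodMap Function.surjective_id).comp e.symm.surjective
  obtain ⟨n, hn⟩ := hL
  let ecoker : ((K × Q) ⧸ LinearMap.range f) ≃ₗ[Λ] L × P :=
    (Submodule.quotEquivOfEq _ _ hrange).trans (π.quotKerEquivOfSurjective hπ)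
  have : Module.Projective Λ (LinearMap.ker f) := hker ▸
    .of_equiv (LinearEquiv.ofInjective (LinearMap.inr Λ K Q) LinearMap.inr_injective)
  have hcoker : FinitePd Λ ((K × Q) ⧸ LinearMap.range f) :=
    ⟨n + 1, (IsSummand.of_equiv ecoker).pdLT ((hn.mono n.le_succ).prod (pdLT_succ_of_projective n))⟩
  refine (IsSummand.trans .fst (.of_equiv ecoker.symm)).pdLT
    (pdLT_quotient_range_of_forall_isSummand hcoker fun V hV => hd V (.of_isSummand hV ?_))
  exact hK.prod_left.prod (.prod_right (.of_projective Q))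

end ExtInjective

section IgusaTodorov

/-- `X` and `Z` have a common `t`-th syzygy; for modules of the form `piPow D a` this records a
relation between classes of syzygies, as used in the definition of the Igusa–Todorov function. -/
def HaveCommonSyzygy (Λ : Type u) [Ring Λ] (t : ℕ) (X Z : Type u) [AddCommGroup X] [Module Λ X]
    [AddCommGroup Z] [Module Λ Z] : Prop :=
  ∃ K : ModuleCat.{u} Λ, IsSyzygy Λ t K X ∧ IsSyzygy Λ t K Z

variable {Λ : Type u} [Ring Λ] {X Y Z C : Type u} [AddCommGroup X] [Module Λ X]
  [AddCommGroup Y] [Module Λ Y] [AddCommGroup Z] [Module Λ Z] [AddCommGroup C] [Module Λ C]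

namespace HaveCommonSyzygy

variable {t : ℕ}

variable (Λ t X) in
theorem refl [IsNoetherianRing Λ] [Module.Finite Λ X] : HaveCommonSyzygy Λ t X X :=
  (IsSyzygy.exists_of_finite Λ X t).imp fun _ hK => ⟨hK, hK⟩

theorem symm (h : HaveCommonSyzygy Λ t X Z) : HaveCommonSyzygy Λ t Z X :=
  h.imp fun _ => And.symm

theorem congr {X' Z' : Type u} [AddCommGroup X'] [Module Λ X'] [AddCommGroup Z'] [Module Λ Z']
    (h : HaveCommonSyzygy Λ t X Z) (e : X ≃ₗ[Λ] X') (e' : Z ≃ₗ[Λ] Z') :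
    HaveCommonSyzygy Λ t X' Z' :=
  h.imp fun _ => And.imp (.congr · e) (.congr · e')

theorem prod {X' Z' : Type u} [AddCommGroup X'] [Module Λ X'] [AddCommGroup Z'] [Module Λ Z']
    (h : HaveCommonSyzygy Λ t X Z) (h' : HaveCommonSyzygy Λ t X' Z') :
    HaveCommonSyzygy Λ t (X × X') (Z × Z') := by
  obtain ⟨K, hKX, hKZ⟩ := h
  obtain ⟨K', hKX', hKZ'⟩ := h'
  exact ⟨.of Λ (K × K'), hKX.prod hKX', hKZ.prod hKZ'⟩

theorem succ [IsNoetherianRing Λ] [Module.Finite Λ X] (h : HaveCommonSyzygy Λ t X Z) :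
    HaveCommonSyzygy Λ (t + 1) X Z := by
  obtain ⟨K, hX, hZ⟩ := h
  have := hX.finite
  exact (IsFirstSyzygy.exists_of_finite Λ K).imp fun _ hK => ⟨⟨K, hX, hK⟩, ⟨K, hZ, hK⟩⟩

end HaveCommonSyzygy

/-- Once the syzygy `L` of `C` is projective, the horseshoe sequence splits, so that the syzygies
of `X` and `Z` only differ by `L`. -/
theorem IsShortExact.exists_haveCommonSyzygy [IsNoetherianRing Λ] [Module.Finite Λ X]
    [Module.Finite Λ Z] {f : X →ₗ[Λ] Z} {g : Z →ₗ[Λ] C} (h : IsShortExact f g)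
    (hC : FinitePd Λ C) : ∃ t, HaveCommonSyzygy Λ t X Z := by
  obtain ⟨n, hn⟩ := hC
  have : Module.Finite Λ C := Module.Finite.of_surjective g h.surjective
  obtain ⟨K, hK⟩ := IsSyzygy.exists_of_finite Λ X n
  obtain ⟨L, hL⟩ := IsSyzygy.exists_of_finite Λ C n
  have := hK.finite
  have := hL.finite
  have : Module.Projective Λ L :=
    projective_iff_pdLT_one.2 (hL.pdLT_of_add (hn.mono (by lia)))
  obtain ⟨T, a, b, hT, hab⟩ := hK.horseshoe hL h
  obtain ⟨e⟩ := hab.nonempty_equiv_prod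
  obtain ⟨K', hK'⟩ := IsFirstSyzygy.exists_of_finite Λ K
  exact ⟨n + 1, K', ⟨K, hK, hK'⟩, T, hT, (hK'.prod_projective L).congr (.refl Λ K') e.symm⟩

section Relations

variable {ι : Type} [Finite ι] (D : ι → ModuleCat.{u} Λ) [∀ i, Module.Finite Λ (D i)]
  [IsNoetherianRing Λ]

/-- The group of differences `a - b` of multiplicity vectors for which `piPow D a` and `piPow D b`
have a common `t`-th syzygy. It is encoded as a `ℤ`-submodule so that the ascending chain condition
applies. -/
def syzygyRelations (t : ℕ) : Submodule ℤ (ι → ℤ) :=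
  AddSubgroup.toIntSubmodule
    { carrier := {z | ∃ a b : ι → ℕ, HaveCommonSyzygy Λ t (piPow D a) (piPow D b) ∧
        ∀ i, z i = a i - b i}
      zero_mem' := ⟨0, 0, .refl Λ _ t, by simp⟩
      add_mem' := by
        rintro z w ⟨a, b, h, hz⟩ ⟨a', b', h', hw⟩
        refine ⟨a + a', b + b', (h.prod h').congr (piPowAddEquiv D a a').symm
          (piPowAddEquiv D b b').symm, fun i => ?_⟩
        simp only [Pi.add_apply, hz, hw, Nat.cast_add]
        ring
      neg_mem' := by
        rintro z ⟨a, b, h, hz⟩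
        exact ⟨b, a, h.symm, fun i => by simp [hz]⟩ }

theorem mem_syzygyRelations {D : ι → ModuleCat.{u} Λ} [∀ i, Module.Finite Λ (D i)] {t : ℕ}
    {z : ι → ℤ} : z ∈ syzygyRelations D t ↔
      ∃ a b : ι → ℕ, HaveCommonSyzygy Λ t (piPow D a) (piPow D b) ∧ ∀ i, z i = a i - b i :=
  Iff.rfl

theorem monotone_syzygyRelations : Monotone (syzygyRelations D) :=
  monotone_nat_of_le_succ fun _ _ hz => by
    obtain ⟨a, b, h, hz⟩ := mem_syzygyRelations.1 hz
    exact mem_syzygyRelations.2 ⟨a, b, h.succ, hz⟩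

theorem exists_forall_syzygyRelations_le : ∃ n, ∀ t, syzygyRelations D t ≤ syzygyRelations D n := by
  have hmono := monotone_syzygyRelations D
  obtain ⟨n, hn⟩ := monotone_stabilizes_iff_noetherian.2
    (inferInstance : IsNoetherian ℤ (ι → ℤ)) ⟨_, hmono⟩
  exact ⟨n, fun t => (hmono (le_max_left t n)).trans (hn _ (le_max_right t n)).ge⟩

end Relations

variable (N : Type u) [AddCommGroup N] [Module Λ N] [IsArtinianRing Λ] [Module.Finite Λ N]

theorem exists_forall_haveCommonSyzygy_prod :
    ∃ n, ∀ (t : ℕ) (X Z : Type u) [AddCommGroup X] [Module Λ X] [AddCommGroup Z] [Module Λ Z],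
      InAdd Λ (.of Λ N) (.of Λ X) → InAdd Λ (.of Λ N) (.of Λ Z) → HaveCommonSyzygy Λ t X Z →
      ∃ W : ModuleCat.{u} Λ, InAdd Λ (.of Λ N) W ∧ HaveCommonSyzygy Λ n (X × W) (Z × W) := by
  obtain ⟨ι, _, D, hDN, hD⟩ := exists_forall_inAdd_equiv_piPow (Λ := Λ) N
  have (i : ι) : Module.Finite Λ (D i) := (hDN i).finite
  obtain ⟨n, hn⟩ := exists_forall_syzygyRelations_le D
  refine ⟨n, fun t X Z _ _ _ _ hX hZ h => ?_⟩
  obtain ⟨a, ⟨ea⟩⟩ := hD X hX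
  obtain ⟨b, ⟨eb⟩⟩ := hD Z hZ
  obtain ⟨a', b', h', hab⟩ := mem_syzygyRelations.1
    (hn t (mem_syzygyRelations.2 ⟨a, b, h.congr ea eb, fun _ => rfl⟩))
  have hab : a + b' = b + a' := funext fun i => by
    have := hab i
    simp only [Pi.add_apply]
    lia
  let eX : (piPow D b × piPow D a') ≃ₗ[Λ] X × piPow D b' :=
    (piPowAddEquiv D b a').symm.trans
      ((hab ▸ piPowAddEquiv D a b').trans (ea.symm.prodCongr (.refl Λ _)))
  exact ⟨.of Λ (piPow D b'), inAdd_piPow D hDN b',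
    ((HaveCommonSyzygy.refl Λ (piPow D b) n).prod h').congr eX (eb.symm.prodCongr (.refl Λ _))⟩

theorem exists_forall_isShortExact_pdLT :
    ∃ n, ∀ (X Z C : Type u) [AddCommGroup X] [Module Λ X] [AddCommGroup Z] [Module Λ Z]
      [AddCommGroup C] [Module Λ C] (f : X →ₗ[Λ] Z) (g : Z →ₗ[Λ] C), IsShortExact f g →
      InAdd Λ (.of Λ N) (.of Λ X) → InAdd Λ (.of Λ N) (.of Λ Z) → FinitePd Λ C →
      PdLT Λ C n := by
  obtain ⟨n, hn⟩ := exists_forall_haveCommonSyzygy_prod (Λ := Λ) N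
  obtain ⟨M, hM⟩ := IsSyzygy.exists_of_finite Λ N n
  have := hM.finite
  obtain ⟨d, hd⟩ := exists_forall_inAdd_pdLT (Λ := Λ) ((M × Λ) × Λ)
  refine ⟨d + 3 + n, fun X Z C _ _ _ _ _ _ f g h hX hZ hC => ?_⟩
  have : Module.Finite Λ X := hX.finite
  have : Module.Finite Λ Z := hZ.finite
  have : Module.Finite Λ C := Module.Finite.of_surjective g h.surjective
  obtain ⟨t, hXZ⟩ := h.exists_haveCommonSyzygy hC
  obtain ⟨W, hW, K, hKX, hKZ⟩ := hn t X Z hX hZ hXZ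
  obtain ⟨L, hL⟩ := IsSyzygy.exists_of_finite Λ C n
  obtain ⟨T, a, b, hT, hab⟩ := hKX.horseshoe hL (h.prodMap_id_comp_fst W)
  have : Module.Finite Λ W := hW.finite
  have := hKX.finite
  have hK : InAdd Λ (.of Λ (M × Λ)) K := hKX.inAdd (hX.prod hW) hM
  exact hL.pdLT_add (hab.pdLT_of_stablyEquiv (hT.stablyEquiv hKZ) (hL.finitePd hC) hK hd)

theorem exists_forall_extension_pdLT (N' : Type u) [AddCommGroup N'] [Module Λ N']
    [Module.Finite Λ N'] (m : ℕ) :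
    ∃ n, ∀ (X Y Z : Type u) [AddCommGroup X] [Module Λ X] [AddCommGroup Y] [Module Λ Y]
      [AddCommGroup Z] [Module Λ Z] (f : X →ₗ[Λ] Y) (g : Y →ₗ[Λ] Z), IsShortExact f g →
      InAdd Λ (.of Λ N) (.of Λ X) →
      (∃ K : ModuleCat.{u} Λ, IsSyzygy Λ m K Z ∧ InAdd Λ (.of Λ N') K) →
      FinitePd Λ Y → PdLT Λ Y n := by
  obtain ⟨M, hM⟩ := IsSyzygy.exists_of_finite Λ N m
  obtain ⟨M', hM'⟩ := IsFirstSyzygy.exists_of_finite Λ N'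
  have := hM.finite
  have := hM'.finite
  obtain ⟨n, hn⟩ := exists_forall_isShortExact_pdLT (Λ := Λ) ((M × Λ) × (M' × Λ))
  refine ⟨n + m, fun X Y Z _ _ _ _ _ _ f g h hX ⟨KZ, hKZ, hN'⟩ hY => ?_⟩
  have : Module.Finite Λ X := hX.finite
  have : Module.Finite Λ KZ := hN'.finite
  obtain ⟨KX, hKX⟩ := IsSyzygy.exists_of_finite Λ X m
  obtain ⟨T, a, b, hT, hab⟩ := hKX.horseshoe hKZ h
  obtain ⟨L, hL⟩ := IsFirstSyzygy.exists_of_finite Λ KZ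
  have hLadd : InAdd Λ (.of Λ (M' × Λ)) L := hL.isSyzygy.inAdd hN' hM'.isSyzygy
  obtain @⟨F, _, _, _, _, _, _, hL⟩ := hL
  obtain ⟨c, d, hcd⟩ := hab.rotate hL
  have hXF : InAdd Λ (.of Λ (M × Λ)) (.of Λ (KX × F)) :=
    (hKX.inAdd hX hM).prod (.prod_right (.of_projective F))
  exact hT.pdLT_add (hn L (KX × F) T c d hcd hLadd.prod_right hXF.prod_left (hT.finitePd hY))

end IgusaTodorov

section Restriction

variable {S Γ : Type u} [Ring S] [Ring Γ] [SMul S Γ]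

theorem InAdd.restrictScalars {N X : Type u} [AddCommGroup N] [Module Γ N] [Module S N]
    [IsScalarTower S Γ N] [AddCommGroup X] [Module Γ X] [Module S X] [IsScalarTower S Γ X]
    (h : InAdd Γ (.of Γ N) (.of Γ X)) : InAdd S (.of S N) (.of S X) := by
  obtain ⟨k, i, p, hip⟩ := h
  exact ⟨k, i.restrictScalars S, p.restrictScalars S,
    LinearMap.ext fun x => LinearMap.congr_fun hip x⟩

end Restriction

theorem OneSyzygyFinite.exists_forall_isFirstSyzygy_inAdd {Λ : Type u} [Ring Λ] [IsArtinianRing Λ]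
    (h : OneSyzygyFinite Λ) :
    ∃ N : ModuleCat.{u} Λ, Module.Finite Λ N ∧ ∀ (K X : Type u) [AddCommGroup K] [Module Λ K]
      [AddCommGroup X] [Module Λ X], Module.Finite Λ X → IsFirstSyzygy Λ K X →
      InAdd Λ N (.of Λ K) := by
  obtain ⟨N, _, hN⟩ := h
  refine ⟨.of Λ (N × Λ), inferInstanceAs (Module.Finite Λ (N × Λ)), fun K X _ _ _ _ _ hK => ?_⟩
  obtain ⟨K', hK'⟩ := exists_isNthSyzygy 1 (ModuleCat.of Λ X)
  exact (hK.isSyzygy.stablyEquiv hK'.isSyzygy).inAdd (hN _ ‹_› K' hK')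

section LeftIdeal

open scoped Pointwise

variable {𝕜 : Type*} {Γ : Type u} [CommRing 𝕜] [Ring Γ] [Algebra 𝕜 Γ] {S : Subalgebra 𝕜 Γ}
  {J : Set Γ}

theorem restrictScalars_span_smul_le (hJ : J ⊆ S) (hJΓ : ∀ a, ∀ x ∈ J, a * x ∈ J) {M : Type*}
    [AddCommGroup M] [Module Γ M] (Y : Submodule S M) :
    (Submodule.span Γ (J • (Y : Set M))).restrictScalars S ≤ Y := fun u hu => by
  induction hu using Submodule.closure_induction with
  | zero => exact Y.zero_mem
  | add u v _ _ hu hv => exact Y.add_mem hu hv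
  | smul_mem a u hu =>
    obtain ⟨x, hx, y, hy, rfl⟩ := hu
    have hax : (a * x) • y ∈ Y := Y.smul_mem (⟨a * x, hJ (hJΓ a x hx)⟩ : S) hy
    rwa [mul_smul] at hax

/-- The first syzygy `Y ⊆ Sᵏ ⊆ Γᵏ` contains the `Γ`-submodule spanned by `J • Y`. -/
theorem exists_isFirstSyzygy_isShortExact (hJ : J ⊆ S) (hJΓ : ∀ a, ∀ x ∈ J, a * x ∈ J)
    (M : Type u) [AddCommGroup M] [Module S M] [Module.Finite S M] :
    ∃ (k : ℕ) (U : Submodule Γ (Fin k → Γ)) (Y Z : ModuleCat.{u} S) (f : U →ₗ[S] Y)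
      (g : Y →ₗ[S] Z), IsFirstSyzygy S Y M ∧ IsShortExact f g ∧
        ∀ x (hx : x ∈ J) (z : Z), (⟨x, hJ hx⟩ : S) • z = 0 := by
  obtain ⟨k, q, hq⟩ := Module.Finite.exists_fin' S M
  let ι : (Fin k → S) →ₗ[S] (Fin k → Γ) := (LinearMap.toSpanSingleton S Γ 1).compLeft (Fin k)
  have hι : Function.Injective ι := fun a b hab => funext fun i => Subtype.ext (by
    simpa [ι, Subalgebra.smul_def] using congrFun hab i)
  let Y : Submodule S (Fin k → Γ) := (LinearMap.ker q).map ι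
  let U : Submodule Γ (Fin k → Γ) := Submodule.span Γ (J • (Y : Set (Fin k → Γ)))
  let f : U →ₗ[S] Y := Submodule.inclusion (restrictScalars_span_smul_le hJ hJΓ Y)
  have hY : IsFirstSyzygy S Y M :=
    .congr (.intro (isShortExact_ker_subtype hq)) (Submodule.equivMapOfInjective ι hι _).symm
      (.refl S M)
  refine ⟨k, U, .of S Y, .of S (Y ⧸ LinearMap.range f), f, (LinearMap.range f).mkQ, hY,
    ⟨Submodule.inclusion_injective _, LinearMap.exact_map_mkQ_range f,
      Submodule.mkQ_surjective _⟩, fun x hx z => ?_⟩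
  obtain ⟨y, rfl⟩ := Submodule.mkQ_surjective _ z
  have hxy : x • (y : Fin k → Γ) ∈ U := Submodule.subset_span (Set.smul_mem_smul hx y.2)
  exact (Submodule.Quotient.mk_eq_zero _).2 ⟨⟨_, hxy⟩, rfl⟩

theorem finFinDim_of_oneSyzygyFinite [IsArtinianRing S] [Module.Finite S Γ] (hJ : J ⊆ S)
    (hJΓ : ∀ a, ∀ x ∈ J, a * x ∈ J) (h1 : OneSyzygyFinite Γ)
    (hq : SyzygyFiniteClass S fun X => Module.Finite S X ∧
      ∀ x (hx : x ∈ J) (v : X), (⟨x, hJ hx⟩ : S) • v = 0) : FinFinDim S := by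
  have : IsArtinianRing Γ := isArtinian_of_tower S (inferInstance : IsArtinian S Γ)
  obtain ⟨N, _, hN⟩ := h1.exists_forall_isFirstSyzygy_inAdd
  obtain ⟨m, N', _, hN'⟩ := hq
  have : Module.Finite S N := Module.Finite.trans Γ N
  obtain ⟨n, hn⟩ := exists_forall_extension_pdLT (Λ := S) N N' m
  refine finFinDim_of_forall_pdLT (n := n + 1) fun M _ _ _ hM => ?_
  obtain ⟨k, U, Y, Z, f, g, hY, hfg, hZ⟩ := exists_isFirstSyzygy_isShortExact hJ hJΓ M
  have := hY.finite
  have hZfin : Module.Finite S Z := Module.Finite.of_surjective g hfg.surjective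
  have hU : InAdd S (.of S N) (.of S U) := InAdd.restrictScalars (Γ := Γ)
    (hN U ((Fin k → Γ) ⧸ U) inferInstance (.intro (isShortExact_mkQ U)))
  obtain ⟨K, hK⟩ := exists_isNthSyzygy m Z
  exact hY.pdLT_succ (hn U Y Z f g hfg hU ⟨K, hK.isSyzygy, hN' Z ⟨hZfin, hZ⟩ K hK⟩
    (hY.isSyzygy.finitePd hM))

end LeftIdeal

section Chain

open scoped Pointwise

theorem prod_ofFn_rev_subset {M : Type*} [Monoid M] {s : ℕ} {A' : Fin (s + 1) → Submonoid M}
    {I : Fin s → Set M} (hIsub : ∀ j, I j ⊆ A' j.castSucc)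
    (hIleft : ∀ j, ∀ x ∈ I j, ∀ a ∈ A' j.succ, a * x ∈ I j) :
    (List.ofFn fun j => I j.rev).prod ⊆ A' 0 := by
  induction s with
  | zero => simp
  | succ s ih =>
    rw [List.ofFn_succ', List.concat_eq_append, List.prod_append, List.prod_singleton, Fin.rev_last]
    have hmem : (List.ofFn fun j : Fin s => I j.castSucc.rev).prod ⊆ A' (Fin.succ 0) := by
      simpa only [Fin.rev_castSucc] using ih (A' := fun j => A' j.succ) (I := fun j => I j.succ)
        (fun j => hIsub j.succ) fun j => hIleft j.succ
    exact Set.mul_subset_iff.2 fun a ha x hx => hIsub 0 (hIleft 0 x hx a (hmem ha))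

theorem mul_mem_prod_ofFn_rev {M : Type*} [Monoid M] {s : ℕ} {I : Fin (s + 1) → Set M}
    (hI : ∀ x ∈ I (Fin.last s), ∀ a, a * x ∈ I (Fin.last s)) (a : M) {x : M}
    (hx : x ∈ (List.ofFn fun j => I j.rev).prod) :
    a * x ∈ (List.ofFn fun j => I j.rev).prod := by
  rw [List.ofFn_succ, List.prod_cons, Fin.rev_zero] at hx ⊢
  obtain ⟨y, hy, z, hz, rfl⟩ := hx
  exact ⟨a * y, hI y hy a, z, hz, mul_assoc a y z⟩

variable {𝕜 : Type*} {Γ : Type u} [CommRing 𝕜] [Ring Γ] [Algebra 𝕜 Γ]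

theorem statement13_general {s : ℕ} (hs : 0 < s) {A' : Fin (s + 1) → Subalgebra 𝕜 Γ}
    [IsArtinianRing (A' 0)] [Module.Finite (A' 0) Γ] (htop : A' (Fin.last s) = ⊤)
    {I : Fin s → Set Γ} (hIsub : ∀ j, I j ⊆ A' j.castSucc)
    (hIleft : ∀ j, ∀ x ∈ I j, ∀ a ∈ A' j.succ, a * x ∈ I j) (h1 : OneSyzygyFinite Γ)
    (hq : SyzygyFiniteClass (A' 0) fun X => Module.Finite (A' 0) X ∧
      ∀ x : Fin s → Γ, (∀ j, x j ∈ I j) →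
        ∀ (hm : (List.ofFn fun j => x j.rev).prod ∈ A' 0) (v : X),
          (⟨(List.ofFn fun j => x j.rev).prod, hm⟩ : A' 0) • v = 0) :
    FinFinDim (A' 0) := by
  obtain ⟨s, rfl⟩ := Nat.exists_eq_add_one.2 hs
  have hleft (a : Γ) : ∀ x ∈ (List.ofFn fun j => I j.rev).prod,
      a * x ∈ (List.ofFn fun j => I j.rev).prod := fun _ => mul_mem_prod_ofFn_rev
    (fun y hy b => hIleft (Fin.last s) y hy b (by simp [Fin.succ_last, htop])) a
  obtain ⟨m, N, hN, h⟩ := hq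
  refine finFinDim_of_oneSyzygyFinite
    (prod_ofFn_rev_subset (A' := fun j => (A' j).toSubmonoid) hIsub hIleft) hleft h1
    ⟨m, N, hN, fun X ⟨hX, hann⟩ => h X ⟨hX, fun x hx _ v => hann _ ?_ v⟩⟩
  exact Set.mem_prod_list_ofFn.2 ⟨fun j => ⟨x j.rev, hx j.rev⟩, rfl⟩

end Chain

/-- Chain of subalgebras `B = A₀ ⊆ ⋯ ⊆ A_s = A` with `I_{i-1}` an ideal of
`A_{i-1}` which is a left ideal of `A_i`.  If `A` is 1-syzygy-finite and
`B/(I_{s-1} ⋯ I₁ I₀)` is `B`-syzygy-finite, then `fin.dim B < ∞`. -/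
theorem statement13 (s : ℕ) (hs : 0 < s)
    (A' : Fin (s + 1) → Subalgebra R A)
    (hchain : ∀ j : Fin s, A' j.castSucc ≤ A' j.succ)
    (htop : A' (Fin.last s) = ⊤)
    (I : Fin s → Set A)
    (hIsub : ∀ j : Fin s, I j ⊆ (A' j.castSucc : Set A))
    (hIzero : ∀ j : Fin s, (0 : A) ∈ I j)
    (hIadd : ∀ j : Fin s, ∀ x ∈ I j, ∀ y ∈ I j, x + y ∈ I j)
    (hIneg : ∀ j : Fin s, ∀ x ∈ I j, -x ∈ I j)
    (hIright : ∀ j : Fin s, ∀ x ∈ I j, ∀ b ∈ A' j.castSucc, x * b ∈ I j)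
    (hIleft : ∀ j : Fin s, ∀ x ∈ I j, ∀ a ∈ A' j.succ, a * x ∈ I j)
    (h1 : OneSyzygyFinite A)
    (hq : SyzygyFiniteClass ↥(A' 0) (fun X => Module.Finite ↥(A' 0) X ∧
      ∀ x : Fin s → A, (∀ j : Fin s, x j ∈ I j) →
        ∀ (hm : (List.ofFn fun j : Fin s => x j.rev).prod ∈ A' 0) (v : X),
          (⟨(List.ofFn fun j : Fin s => x j.rev).prod, hm⟩ : ↥(A' 0)) • v = 0)) :
    FinFinDim ↥(A' 0) := by
  have : Module.Finite R (A' 0) :=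
    Module.Finite.of_injective (A' 0).val.toLinearMap Subtype.val_injective
  have : IsArtinianRing (A' 0) := IsArtinianRing.of_finite R (A' 0)
  have : Module.Finite (A' 0) A := Module.Finite.of_restrictScalars_finite R (A' 0) A
  exact statement13_general hs htop hIsub hIleft h1 hq
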